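/- arXiv:0803.4392 — 3 statements merged into one kernel-verified Lean document; each statement's English description precedes it below -/
import Mathlib

section
/- Let E = {p_1⋯p_{j−1} p̌_j p_{j+1}⋯p_k : k ≥ 2, 1 ≤ j ≤ k} and let Φ*(x) = ∫_0^{|x|} α^{−1}(t) dt. There is an absolute constant C > 0 such that for every l ∈ ℕ, every f ∈ L^{Φ*}(𝕋^∞), and every λ > 0, λ({x ∈ 𝕋^∞ : ℳ_{l/E} f(x) > λ}) ≤ (C/λ)·(1 + ∫_{𝕋^∞} Φ*(|f(t)|) dλ(t)). -/
open MeasureTheory Set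

/-- The circle `𝕋 = ℝ/ℤ` with its Lebesgue (Haar) probability measure. -/
abbrev Circle1 := AddCircle (1 : ℝ)

/-- The infinite torus `𝕋^∞ = ∏_{k=1}^∞ 𝕋`. -/
abbrev Tinf := ℕ → Circle1

/-- `nthPrime k` is the `(k+1)`-st prime: `nthPrime 0 = 2 = p_1`, … -/
noncomputable def nthPrime (k : ℕ) : ℕ := Nat.nth Nat.Prime k

/-- The arc `[a, b) ⊆ 𝕋`. -/
def circleIco (a b : ℝ) : Set Circle1 := (fun r : ℝ => (r : Circle1)) '' Set.Ico a b

/-- The rectangle `B_m(j_1,…,j_d)` in `𝕋^∞`, where `m = p_1^{L_1} ⋯ p_d^{L_d}`. -/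
def Rect (d : ℕ) (L j : Fin d → ℕ) : Set Tinf :=
  {x | ∀ k : Fin d,
    x k.val ∈ circleIco ((j k : ℝ) / ((nthPrime k.val ^ L k : ℕ) : ℝ))
      (((j k : ℝ) + 1) / ((nthPrime k.val ^ L k : ℕ) : ℝ))}

/-- `μ` is the product Lebesgue probability measure on `𝕋^∞`. -/
def IsProductLebesgue (μ : Measure Tinf) : Prop :=
  IsProbabilityMeasure μ ∧
    ∀ (s : Finset ℕ) (A : ℕ → Set Circle1), (∀ i, MeasurableSet (A i)) →
      μ {x | ∀ i ∈ s, x i ∈ A i} = ∏ i ∈ s, volume (A i)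

/-- The rectangle maximal function `ℳ_D g(x)`. -/
noncomputable def MMax (μ : Measure Tinf) (D : Set ℕ) (g : Tinf → ℝ) (x : Tinf) : ENNReal :=
  ⨆ (d : ℕ) (L : Fin d → ℕ) (j : Fin d → ℕ) (_ : (∏ k, nthPrime k.val ^ L k) ∈ D)
    (_ : ∀ k, j k < nthPrime k.val ^ L k) (_ : x ∈ Rect d L j),
    (μ (Rect d L j))⁻¹ * ∫⁻ y in Rect d L j, ‖g y‖₊ ∂μ

/-- `l/D = {n : n divides l and l/n ∈ D}`. -/
def divSet (l : ℕ) (D : Set ℕ) : Set ℕ := {n | n ∣ l ∧ l / n ∈ D}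

/-- The set `E = {p_1 ⋯ p_{j-1} p̌_j p_{j+1} ⋯ p_k : k ≥ 2, 1 ≤ j ≤ k}`. -/
noncomputable def Eset : Set ℕ :=
  {m | ∃ k : ℕ, 2 ≤ k ∧ ∃ j < k, m = ∏ i ∈ Finset.range k \ {j}, nthPrime i}

/-- `α(x) = x^{x-1}` for `x > 1` and `α(x) = x` for `x ≤ 1`. -/
noncomputable def alphaFn (x : ℝ) : ℝ := if 1 < x then x ^ (x - 1) else x

/-- `α⁻¹`, the inverse function of `α`. -/
noncomputable def alphaInv : ℝ → ℝ := Function.invFun alphaFn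

/-- `Φ*(x) = ∫_0^{|x|} α⁻¹(t) dt`. -/
noncomputable def PhiStar (x : ℝ) : ℝ := ∫ t in (0:ℝ)..|x|, alphaInv t

/-!
Treat the rectangles in order of decreasing `k` and select one unless it lies in a selected one or
the selected ones already fill a fixed proportion of its parent, the rectangle with the factor `p_j`
removed from `m` as well. Inside its parent a rectangle is constrained in direction `j` only, and
earlier rectangles of the same direction are disjoint from it, so its intersections with earlier
ones are no larger than for independent events. Hence the overlap function `N` of the selected
rectangles has binomial moments of Poisson type, and `∫_{N ≥ 1} N ^ N` is at most a small multiple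
of their total measure. The function `Φ*` is made for the Young inequality
`|f| N ≤ Φ*(|f|) + N ^ N`, which bounds that total measure. The rectangles not selected because of
their parents are covered by nested parents, each filled in a fixed proportion.
-/

open scoped ENNReal Finset

section SymmetricSums

variable {ι M R : Type*}

lemma sum_powersetCard_succ_insert [DecidableEq ι] [AddCommMonoid M] {a : ι} {S : Finset ι}
    (ha : a ∉ S) (n : ℕ) (F : Finset ι → M) :
    ∑ J ∈ (insert a S).powersetCard (n + 1), F J =
      ∑ J ∈ S.powersetCard (n + 1), F J + ∑ J ∈ S.powersetCard n, F (insert a J) := by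
  have notMem : ∀ {m J}, J ∈ S.powersetCard m → a ∉ J := fun hJ haJ ↦
    ha ((Finset.mem_powersetCard.1 hJ).1 haJ)
  rw [Finset.powersetCard_succ_insert ha, Finset.sum_union, Finset.sum_image]
  · intro J hJ J' hJ' h
    rw [← Finset.erase_insert (notMem hJ), h, Finset.erase_insert (notMem hJ')]
  · refine Finset.disjoint_left.2 fun J hJ hJ' ↦ ?_
    obtain ⟨J', -, rfl⟩ := Finset.mem_image.1 hJ'
    exact notMem hJ (Finset.mem_insert_self a J')

lemma factorial_mul_sum_powersetCard_prod_le_pow [CommSemiring R] [PartialOrder R]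
    [CanonicallyOrderedAdd R] [IsOrderedRing R] (S : Finset ι) (q : ι → R) (n : ℕ) :
    (n.factorial : R) * ∑ J ∈ S.powersetCard n, ∏ i ∈ J, q i ≤ (∑ i ∈ S, q i) ^ n := by
  classical
  induction S using Finset.induction_on generalizing n with
  | empty =>
    cases n with
    | zero => simp
    | succ n => simp [Finset.powersetCard_eq_empty.2 (show #(∅ : Finset ι) < n + 1 by simp)]
  | insert a S ha ih =>
    cases n with
    | zero => simp
    | succ n =>
      have prod_insert : ∀ J ∈ S.powersetCard n, ∏ i ∈ insert a J, q i = q a * ∏ i ∈ J, q i :=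
        fun J hJ ↦ Finset.prod_insert fun h ↦ ha ((Finset.mem_powersetCard.1 hJ).1 h)
      rw [sum_powersetCard_succ_insert ha, Finset.sum_congr rfl prod_insert, ← Finset.mul_sum,
        Finset.sum_insert ha, add_comm (q a)]
      calc ((n + 1).factorial : R) * (∑ J ∈ S.powersetCard (n + 1), ∏ i ∈ J, q i
              + q a * ∑ J ∈ S.powersetCard n, ∏ i ∈ J, q i)
          = (n + 1).factorial * ∑ J ∈ S.powersetCard (n + 1), ∏ i ∈ J, q i
              + (n + 1 : ℕ) * (n.factorial * ∑ J ∈ S.powersetCard n, ∏ i ∈ J, q i) * q a := by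
            rw [Nat.factorial_succ]; push_cast; ring
        _ ≤ (∑ i ∈ S, q i) ^ (n + 1) + (n + 1 : ℕ) * (∑ i ∈ S, q i) ^ n * q a := by
            gcongr
            exacts [ih (n + 1), ih n]
        _ ≤ (∑ i ∈ S, q i + q a) ^ (n + 1) :=
            pow_add_mul_le_add_pow_of_sq_nonneg zero_le zero_le zero_le zero_le (n + 1)

end SymmetricSums

section Overlap

variable {Ω ι : Type*}

open Classical in
/-- The overlap function `∑_{a ∈ S} 1_{R a}` of a finite family of sets. -/
noncomputable def overlap (R : ι → Set Ω) (S : Finset ι) (x : Ω) : ℕ := #{a ∈ S | x ∈ R a}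

lemma choose_overlap_eq_sum_indicator (R : ι → Set Ω) (S : Finset ι) (n : ℕ) (x : Ω) :
    ((overlap R S x).choose n : ℝ≥0∞) =
      ∑ J ∈ S.powersetCard n, (⋂ a ∈ J, R a).indicator 1 x := by
  classical
  have filter_eq : (S.powersetCard n).filter (fun J ↦ x ∈ ⋂ a ∈ J, R a) =
      ({a ∈ S | x ∈ R a} : Finset ι).powersetCard n := by
    ext J
    simp only [Finset.mem_powersetCard, Finset.mem_filter, mem_iInter, Finset.subset_iff]
    grind
  simp only [indicator_apply, Pi.one_apply, Finset.sum_boole, filter_eq, Finset.card_powersetCard,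
    overlap]

variable [MeasurableSpace Ω] {μ : Measure Ω} {R : ι → Set Ω} {S : Finset ι}

/-- The binomial moments of the overlap function of `(R a)_{a ∈ S}` decay like those of a Poisson
variable of mean `θ`. The moment `∫ (N choose (n + 1))` is written as the sum of the measures of all
`(n + 1)`-fold intersections. -/
def HasPoissonOverlap (μ : Measure Ω) (R : ι → Set Ω) (θ : ℝ≥0∞) (S : Finset ι) : Prop :=
  ∀ n : ℕ, (n.factorial : ℝ≥0∞) * ∑ J ∈ S.powersetCard (n + 1), μ (⋂ a ∈ J, R a) ≤
    θ ^ n * ∑ a ∈ S, μ (R a)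

lemma measurable_choose_overlap (hR : ∀ a, MeasurableSet (R a)) (n : ℕ) :
    Measurable fun x ↦ ((overlap R S x).choose n : ℝ≥0∞) := by
  simp_rw [choose_overlap_eq_sum_indicator]
  exact Finset.measurable_sum _ fun J _ ↦
    measurable_one.indicator (Finset.measurableSet_biInter J fun a _ ↦ hR a)

lemma lintegral_choose_overlap (hR : ∀ a, MeasurableSet (R a)) (n : ℕ) :
    ∫⁻ x, (overlap R S x).choose n ∂μ = ∑ J ∈ S.powersetCard n, μ (⋂ a ∈ J, R a) := by
  have measurableSet_biInter (J : Finset ι) : MeasurableSet (⋂ a ∈ J, R a) :=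
    Finset.measurableSet_biInter J fun a _ ↦ hR a
  simp_rw [choose_overlap_eq_sum_indicator]
  rw [lintegral_finsetSum _ fun J _ ↦ measurable_one.indicator (measurableSet_biInter J)]
  simp_rw [lintegral_indicator_one (measurableSet_biInter _)]

lemma sum_lintegral_le_lintegral_sum (S : Finset ι) (f : ι → Ω → ℝ≥0∞) :
    ∑ a ∈ S, ∫⁻ x, f a x ∂μ ≤ ∫⁻ x, ∑ a ∈ S, f a x ∂μ := by
  classical
  induction S using Finset.induction_on with
  | empty => simp
  | insert a S ha ih =>
    simp_rw [Finset.sum_insert ha]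
    exact (add_le_add_right ih _).trans (le_lintegral_add _ _)

lemma sum_setLIntegral_le_lintegral_mul_overlap (hR : ∀ a, MeasurableSet (R a)) (f : Ω → ℝ≥0∞) :
    ∑ a ∈ S, ∫⁻ x in R a, f x ∂μ ≤ ∫⁻ x, f x * overlap R S x ∂μ := by
  classical
  have mul_overlap (x : Ω) : f x * overlap R S x = ∑ a ∈ S, (R a).indicator f x := by
    simp only [indicator_apply, ← Finset.sum_filter, Finset.sum_const, nsmul_eq_mul, overlap,
      mul_comm]
  simp_rw [mul_overlap, ← lintegral_indicator (hR _)]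
  exact sum_lintegral_le_lintegral_sum S _

lemma succ_pow_succ_le_three_mul_six_pow_mul_factorial (n : ℕ) :
    (n + 1) ^ (n + 1) ≤ 3 * 6 ^ n * n.factorial := by
  have exp_le : Real.exp ((n + 1 : ℕ) : ℝ) ≤ 3 ^ (n + 1) := by
    rw [← Real.exp_one_pow]
    gcongr
    exact Real.exp_one_lt_three.le
  have pow_le := (Real.pow_div_factorial_le_exp _ (Nat.cast_nonneg (n + 1)) (n + 1)).trans exp_le
  rw [div_le_iff₀ (by positivity)] at pow_le
  calc (n + 1) ^ (n + 1) ≤ 3 ^ (n + 1) * (n + 1).factorial := mod_cast pow_le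
    _ = 3 * 3 ^ n * (n + 1) * n.factorial := by rw [Nat.factorial_succ]; ring
    _ ≤ 3 * 3 ^ n * 2 ^ n * n.factorial := by
        gcongr
        exact Nat.lt_two_pow_self
    _ = 3 * 6 ^ n * n.factorial := by
        rw [show 6 = 3 * 2 from rfl, mul_pow]
        ring

/-- A combination of binomial coefficients of `N` dominating `N ^ N`, with coefficients matched to
the decay in `HasPoissonOverlap`. -/
noncomputable def binomialMajorant (N : ℕ) : ℝ≥0∞ :=
  ∑' n : ℕ, 3 * 6 ^ n * n.factorial * (N.choose (n + 1) : ℝ≥0∞)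

lemma pow_self_le_binomialMajorant {N : ℕ} (hN : N ≠ 0) :
    (N : ℝ≥0∞) ^ N ≤ binomialMajorant N := by
  obtain ⟨n, rfl⟩ := Nat.exists_eq_succ_of_ne_zero hN
  calc ((n + 1 : ℕ) : ℝ≥0∞) ^ (n + 1)
      ≤ 3 * 6 ^ n * n.factorial * ((n + 1).choose (n + 1) : ℕ) := by
        rw [Nat.choose_self, Nat.cast_one, mul_one]
        exact mod_cast succ_pow_succ_le_three_mul_six_pow_mul_factorial n
    _ ≤ binomialMajorant (n + 1) :=
        ENNReal.le_tsum
          (f := fun i : ℕ ↦ 3 * 6 ^ i * i.factorial * ((n + 1).choose (i + 1) : ℝ≥0∞)) n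

lemma measurable_binomialMajorant_overlap (hR : ∀ a, MeasurableSet (R a)) :
    Measurable fun x ↦ binomialMajorant (overlap R S x) :=
  Measurable.tsum fun n ↦ (measurable_choose_overlap hR (n + 1)).const_mul _

lemma HasPoissonOverlap.lintegral_binomialMajorant_le (hR : ∀ a, MeasurableSet (R a))
    (hS : HasPoissonOverlap μ R 12⁻¹ S) :
    ∫⁻ x, binomialMajorant (overlap R S x) ∂μ ≤ 6 * ∑ a ∈ S, μ (R a) := by
  have six_mul : (6 : ℝ≥0∞) * 12⁻¹ = 2⁻¹ := by
    rw [show (12 : ℝ≥0∞) = 6 * 2 by norm_num, ENNReal.mul_inv (by simp) (by simp), ← mul_assoc,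
      ENNReal.mul_inv_cancel (by simp) (by simp), one_mul]
  simp only [binomialMajorant]
  rw [lintegral_tsum fun n ↦ ((measurable_choose_overlap hR (n + 1)).const_mul _).aemeasurable]
  calc ∑' n : ℕ, ∫⁻ x, 3 * 6 ^ n * n.factorial * ((overlap R S x).choose (n + 1) : ℝ≥0∞) ∂μ
      = ∑' n : ℕ, 3 * 6 ^ n *
          (n.factorial * ∑ J ∈ S.powersetCard (n + 1), μ (⋂ a ∈ J, R a)) := by
        simp_rw [lintegral_const_mul _ (measurable_choose_overlap hR _),
          lintegral_choose_overlap hR, mul_assoc]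
    _ ≤ ∑' n : ℕ, 3 * 6 ^ n * (12⁻¹ ^ n * ∑ a ∈ S, μ (R a)) :=
        ENNReal.tsum_le_tsum fun n ↦ mul_le_mul_right (hS n) _
    _ = ∑' n : ℕ, (3 * ∑ a ∈ S, μ (R a)) * 2⁻¹ ^ n := by
        congr 1 with n
        rw [← six_mul, mul_pow]
        ring
    _ = 6 * ∑ a ∈ S, μ (R a) := by
        rw [ENNReal.tsum_mul_left, ENNReal.tsum_geometric_two]
        ring

lemma HasPoissonOverlap.mul_sum_measure_le [IsFiniteMeasure μ] (hR : ∀ a, MeasurableSet (R a))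
    (hS : HasPoissonOverlap μ R 12⁻¹ S) {f g : Ω → ℝ≥0∞}
    (hfg : ∀ x (n : ℕ), n ≠ 0 → f x * n ≤ g x + n ^ n) {t : ℝ≥0∞} (ht : 12 ≤ t) (ht_top : t ≠ ∞)
    (hmean : ∀ a ∈ S, t * μ (R a) ≤ ∫⁻ x in R a, f x ∂μ) :
    t * ∑ a ∈ S, μ (R a) ≤ 2 * ∫⁻ x, g x ∂μ := by
  set A := ∑ a ∈ S, μ (R a)
  have young (x : Ω) : f x * overlap R S x ≤ g x + binomialMajorant (overlap R S x) := by
    rcases eq_or_ne (overlap R S x) 0 with h | h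
    · simp [h]
    · exact (hfg x _ h).trans (add_le_add_right (pow_self_le_binomialMajorant h) _)
  have mul_le : t * A ≤ ∫⁻ x, g x ∂μ + 6 * A :=
    calc t * A = ∑ a ∈ S, t * μ (R a) := Finset.mul_sum ..
      _ ≤ ∑ a ∈ S, ∫⁻ x in R a, f x ∂μ := Finset.sum_le_sum hmean
      _ ≤ ∫⁻ x, f x * overlap R S x ∂μ := sum_setLIntegral_le_lintegral_mul_overlap hR f
      _ ≤ ∫⁻ x, g x + binomialMajorant (overlap R S x) ∂μ := lintegral_mono young
      _ = ∫⁻ x, g x ∂μ + ∫⁻ x, binomialMajorant (overlap R S x) ∂μ :=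
        lintegral_add_right _ (measurable_binomialMajorant_overlap hR)
      _ ≤ ∫⁻ x, g x ∂μ + 6 * A := add_le_add_right (hS.lintegral_binomialMajorant_le hR) _
  have mul_ne_top : t * A ≠ ∞ :=
    ENNReal.mul_ne_top ht_top (ENNReal.sum_ne_top.2 fun a _ ↦ measure_ne_top μ (R a))
  refine (ENNReal.add_le_add_iff_right mul_ne_top).1 ?_
  calc t * A + t * A
      ≤ (∫⁻ x, g x ∂μ + 6 * A) + (∫⁻ x, g x ∂μ + 6 * A) := add_le_add mul_le mul_le
    _ = 2 * ∫⁻ x, g x ∂μ + 12 * A := by ring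
    _ ≤ 2 * ∫⁻ x, g x ∂μ + t * A := by gcongr

end Overlap

section Selection

variable {Ω ι : Type*} [MeasurableSpace Ω] {μ : Measure Ω} {Q A : Set Ω} {R : ι → Set Ω}

/-- Conditionally on `Q`, the sets `A ⊆ Q` and `R b`, `b ∈ J`, are at most as correlated as
independent events: `μ(A ∩ ⋂ R b) / μ Q ≤ μ A / μ Q * ∏ μ(R b ∩ Q) / μ Q`. Denominators are cleared,
so that the inequality makes sense for null `Q`. -/
def IsSubindepWithin (μ : Measure Ω) (Q A : Set Ω) (R : ι → Set Ω) (J : Finset ι) : Prop :=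
  μ Q ^ #J * μ (A ∩ ⋂ b ∈ J, R b) ≤ μ A * ∏ b ∈ J, μ (R b ∩ Q)

lemma IsSubindepWithin.measure_inter_le_mul_prod_div {J : Finset ι}
    (h : IsSubindepWithin μ Q A R J) (hQ : μ Q ≠ 0) (hQ_top : μ Q ≠ ∞) :
    μ (A ∩ ⋂ b ∈ J, R b) ≤ μ A * ∏ b ∈ J, μ (R b ∩ Q) / μ Q := by
  have prod_div : ∏ b ∈ J, μ (R b ∩ Q) / μ Q = (∏ b ∈ J, μ (R b ∩ Q)) / μ Q ^ #J := by
    simp only [div_eq_mul_inv, Finset.prod_mul_distrib, Finset.prod_const, ENNReal.inv_pow]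
  rw [prod_div, ← mul_div_assoc, ENNReal.le_div_iff_mul_le (.inl (pow_ne_zero _ hQ))
    (.inl (ENNReal.pow_ne_top hQ_top)), mul_comm]
  exact h

lemma hasPoissonOverlap_insert [DecidableEq ι] {S : Finset ι} {C : ℝ≥0∞} {a : ι}
    (hS : HasPoissonOverlap μ R C⁻¹ S) (ha : a ∉ S) (hQ_top : μ Q ≠ ∞)
    (hindep : ∀ J ⊆ S, IsSubindepWithin μ Q (R a) R J)
    (hQ : C * ∑ b ∈ S, μ (R b ∩ Q) < μ Q) : HasPoissonOverlap μ R C⁻¹ (insert a S) := by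
  intro n
  have hQ_zero : μ Q ≠ 0 := hQ.ne_bot
  have sum_le : ∑ b ∈ S, μ (R b ∩ Q) / μ Q ≤ C⁻¹ := by
    simp_rw [div_eq_mul_inv]
    rw [← Finset.sum_mul, ← div_eq_mul_inv, ENNReal.le_inv_iff_mul_le, mul_comm, ← mul_div_assoc]
    exact ENNReal.div_le_of_le_mul (by simpa using hQ.le)
  have insert_le : (n.factorial : ℝ≥0∞) * ∑ J ∈ S.powersetCard n, μ (⋂ b ∈ insert a J, R b) ≤
      C⁻¹ ^ n * μ (R a) :=
    calc (n.factorial : ℝ≥0∞) * ∑ J ∈ S.powersetCard n, μ (⋂ b ∈ insert a J, R b)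
        ≤ n.factorial * ∑ J ∈ S.powersetCard n, μ (R a) * ∏ b ∈ J, μ (R b ∩ Q) / μ Q := by
          gcongr with J hJ
          rw [Finset.set_biInter_insert]
          exact (hindep J (Finset.mem_powersetCard.1 hJ).1).measure_inter_le_mul_prod_div
            hQ_zero hQ_top
      _ = (n.factorial * ∑ J ∈ S.powersetCard n, ∏ b ∈ J, μ (R b ∩ Q) / μ Q) * μ (R a) := by
          rw [← Finset.mul_sum]
          ring
      _ ≤ C⁻¹ ^ n * μ (R a) := by
          gcongr
          exact (factorial_mul_sum_powersetCard_prod_le_pow S _ n).trans (by gcongr)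
  rw [sum_powersetCard_succ_insert ha, Finset.sum_insert ha, mul_add, mul_add, add_comm]
  exact add_le_add insert_le (hS n)

/-- Cells `R a` inside parents `Q a`, each carrying a scale `lvl a` and a direction `dir a`. Cells
of one direction are nested, parents are nested irrespective of direction, and within its parent a
cell is subindependent of cells of larger scale in pairwise different other directions. -/
structure IsDirectedCellFamily {κ δ : Type*} [LE κ] (μ : Measure Ω) (R Q : ι → Set Ω)
    (lvl : ι → κ) (dir : ι → δ) : Prop where
  measurableSet_cell (a : ι) : MeasurableSet (R a)
  measurableSet_parent (a : ι) : MeasurableSet (Q a)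
  cell_subset_parent (a : ι) : R a ⊆ Q a
  cell_nested {a b : ι} : dir a = dir b → lvl a ≤ lvl b → R a ⊆ R b ∨ Disjoint (R a) (R b)
  parent_nested {a b : ι} : lvl a ≤ lvl b → Q a ⊆ Q b ∨ Disjoint (Q a) (Q b)
  isSubindepWithin_parent {a : ι} {J : Finset ι} : (∀ b ∈ J, lvl a ≤ lvl b ∧ dir b ≠ dir a) →
    InjOn dir J → IsSubindepWithin μ (Q a) (R a) R J

lemma measure_biUnion_le_of_nested {ρ : Measure Ω} {Q : ι → Set Ω} {B : Finset ι} {C : ℝ≥0∞}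
    (hQ : ∀ a, MeasurableSet (Q a))
    (hnested : ∀ a b, Q a ⊆ Q b ∨ Q b ⊆ Q a ∨ Disjoint (Q a) (Q b))
    (hle : ∀ a ∈ B, μ (Q a) ≤ C * ρ (Q a)) : μ (⋃ a ∈ B, Q a) ≤ C * ρ univ := by
  classical
  set D : Finset (Set Ω) := {U ∈ B.image Q | Maximal (· ∈ B.image Q) U}
  have exists_of_mem : ∀ U ∈ D, ∃ a ∈ B, Q a = U := fun U hU ↦
    Finset.mem_image.1 (Finset.mem_filter.1 hU).1
  have maximal : ∀ U ∈ D, Maximal (· ∈ B.image Q) U := fun U hU ↦ (Finset.mem_filter.1 hU).2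
  have cover : ⋃ a ∈ B, Q a ⊆ ⋃ U ∈ D, U := by
    refine iUnion₂_subset fun a ha ↦ ?_
    obtain ⟨U, haU, hU⟩ := (B.image Q).exists_le_maximal (Finset.mem_image_of_mem Q ha)
    exact haU.trans (subset_biUnion_of_mem (u := id) (Finset.mem_filter.2 ⟨hU.1, hU⟩))
  have disjoint : (D : Set (Set Ω)).PairwiseDisjoint id := by
    intro U hU V hV hne
    obtain ⟨a, -, rfl⟩ := exists_of_mem U hU
    obtain ⟨b, -, rfl⟩ := exists_of_mem V hV
    rcases hnested a b with hab | hba | hdisj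
    · exact absurd ((maximal _ hU).eq_of_le (maximal _ hV).1 hab) hne
    · exact absurd ((maximal _ hV).eq_of_le (maximal _ hU).1 hba).symm hne
    · exact hdisj
  have measurable : ∀ U ∈ D, MeasurableSet U := fun U hU ↦ by
    obtain ⟨a, -, rfl⟩ := exists_of_mem U hU
    exact hQ a
  calc μ (⋃ a ∈ B, Q a) ≤ ∑ U ∈ D, μ U := (measure_mono cover).trans (measure_biUnion_finset_le _ _)
    _ ≤ ∑ U ∈ D, C * ρ U := Finset.sum_le_sum fun U hU ↦ by
        obtain ⟨a, ha, rfl⟩ := exists_of_mem U hU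
        exact hle a ha
    _ = C * ρ (⋃ U ∈ D, U) := by
        rw [← Finset.mul_sum]
        exact congr_arg _ (measure_biUnion_finset disjoint measurable).symm
    _ ≤ C * ρ univ := by gcongr; exact subset_univ _

namespace IsDirectedCellFamily

variable {κ δ : Type*} [LinearOrder κ] {lvl : ι → κ} {dir : ι → δ} {Q : ι → Set Ω}

lemma isSubindepWithin_of_disjoint (h : IsDirectedCellFamily μ R Q lvl dir) {a : ι} {J : Finset ι}
    (haJ : a ∉ J) (hlvl : ∀ b ∈ J, lvl a ≤ lvl b)
    (hdisj : (insert a (J : Set ι)).Pairwise fun b c ↦ dir b = dir c → Disjoint (R b) (R c)) :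
    IsSubindepWithin μ (Q a) (R a) R J := by
  rcases (R a ∩ ⋂ b ∈ J, R b).eq_empty_or_nonempty with hempty | ⟨x, hxa, hxJ⟩
  · simp [IsSubindepWithin, hempty]
  have mem : ∀ b ∈ insert a (J : Set ι), x ∈ R b := by
    rintro b (rfl | hb)
    exacts [hxa, mem_iInter₂.1 hxJ b hb]
  have injOn : InjOn dir (insert a (J : Set ι)) := fun b hb c hc hbc ↦ by
    by_contra hne
    exact disjoint_left.1 (hdisj hb hc hne hbc) (mem b hb) (mem c hc)
  refine h.isSubindepWithin_parent (fun b hb ↦ ⟨hlvl b hb, fun hba ↦ haJ ?_⟩)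
    (injOn.mono (subset_insert _ _))
  rwa [← injOn (mem_insert_of_mem a hb) (mem_insert a _) hba]

lemma exists_subset_hasPoissonOverlap [IsFiniteMeasure μ] (h : IsDirectedCellFamily μ R Q lvl dir)
    (C : ℝ≥0∞) (T : Finset ι) :
    ∃ S ⊆ T, HasPoissonOverlap μ R C⁻¹ S ∧
      (S : Set ι).Pairwise (fun a b ↦ dir a = dir b → Disjoint (R a) (R b)) ∧
      ∀ a ∈ T, (∃ b ∈ S, R a ⊆ R b) ∨ μ (Q a) ≤ C * ∑ b ∈ S, μ (R b ∩ Q a) := by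
  classical
  induction T using Finset.induction_on_min_value lvl with
  | empty => exact ⟨∅, by simp [HasPoissonOverlap]⟩
  | insert a T haT hlvl ih =>
    obtain ⟨S, hST, hS, hdisj, hcover⟩ := ih
    by_cases ha : (∃ b ∈ S, R a ⊆ R b) ∨ μ (Q a) ≤ C * ∑ b ∈ S, μ (R b ∩ Q a)
    · exact ⟨S, hST.trans (T.subset_insert a), hS, hdisj,
        Finset.forall_mem_insert .. |>.2 ⟨ha, hcover⟩⟩
    push Not at ha
    obtain ⟨hsub, hQ⟩ := ha
    have disjoint_of_dir_eq : ∀ b ∈ S, a ≠ b → dir a = dir b → Disjoint (R a) (R b) :=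
      fun b hb _ hab ↦ (h.cell_nested hab (hlvl b (hST hb))).resolve_left (hsub b hb)
    have symm : Std.Symm fun b c ↦ dir b = dir c → Disjoint (R b) (R c) :=
      ⟨fun b c hbc hcb ↦ (hbc hcb.symm).symm⟩
    have hdisj' : (insert a (S : Set ι)).Pairwise
        fun b c ↦ dir b = dir c → Disjoint (R b) (R c) :=
      pairwise_insert_of_symm.2 ⟨hdisj, disjoint_of_dir_eq⟩
    have haS : a ∉ S := fun haS ↦ haT (hST haS)
    have hindep : ∀ J ⊆ S, IsSubindepWithin μ (Q a) (R a) R J := fun J hJ ↦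
      h.isSubindepWithin_of_disjoint (fun haJ ↦ haS (hJ haJ)) (fun b hb ↦ hlvl b (hST (hJ hb)))
        (hdisj'.mono (insert_subset_insert hJ))
    refine ⟨insert a S, Finset.insert_subset_insert a hST,
      hasPoissonOverlap_insert hS haS (measure_ne_top μ (Q a)) hindep hQ,
      by rwa [Finset.coe_insert], Finset.forall_mem_insert .. |>.2
        ⟨.inl ⟨a, S.mem_insert_self a, subset_rfl⟩, fun b hb ↦ (hcover b hb).imp ?_ fun hle ↦ ?_⟩⟩
    · exact fun ⟨c, hc, hbc⟩ ↦ ⟨c, Finset.mem_insert_of_mem hc, hbc⟩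
    · refine hle.trans ?_
      gcongr
      exact S.subset_insert a

lemma measure_biUnion_le (h : IsDirectedCellFamily μ R Q lvl dir) {C : ℝ≥0∞} {S T : Finset ι}
    (hcover : ∀ a ∈ T, (∃ b ∈ S, R a ⊆ R b) ∨ μ (Q a) ≤ C * ∑ b ∈ S, μ (R b ∩ Q a)) :
    μ (⋃ a ∈ T, R a) ≤ (1 + C) * ∑ b ∈ S, μ (R b) := by
  classical
  set B : Finset ι := {a ∈ T | μ (Q a) ≤ C * ∑ b ∈ S, μ (R b ∩ Q a)}
  set ρ : Measure Ω := ∑ b ∈ S, μ.restrict (R b)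
  have ρ_parent (a : ι) : ρ (Q a) = ∑ b ∈ S, μ (R b ∩ Q a) := by
    simp only [ρ, Measure.finsetSum_apply, Measure.restrict_apply (h.measurableSet_parent a),
      inter_comm]
  have ρ_univ : ρ univ = ∑ b ∈ S, μ (R b) := by
    simp only [ρ, Measure.finsetSum_apply, Measure.restrict_apply_univ]
  have nested (a b : ι) : Q a ⊆ Q b ∨ Q b ⊆ Q a ∨ Disjoint (Q a) (Q b) :=
    (le_total (lvl a) (lvl b)).elim (fun hab ↦ (h.parent_nested hab).imp_right .inr)
      fun hba ↦ .inr ((h.parent_nested hba).imp_right fun hd ↦ hd.symm)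
  have subset : ⋃ a ∈ T, R a ⊆ (⋃ b ∈ S, R b) ∪ ⋃ a ∈ B, Q a := by
    refine iUnion₂_subset fun a ha ↦ ?_
    rcases hcover a ha with ⟨b, hb, hab⟩ | hle
    · exact (hab.trans (subset_biUnion_of_mem (Finset.mem_coe.2 hb))).trans subset_union_left
    · exact (h.cell_subset_parent a).trans <| (subset_biUnion_of_mem (u := Q)
        (Finset.mem_coe.2 (Finset.mem_filter.2 ⟨ha, hle⟩))).trans subset_union_right
  calc μ (⋃ a ∈ T, R a) ≤ μ (⋃ b ∈ S, R b) + μ (⋃ a ∈ B, Q a) :=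
        (measure_mono subset).trans (measure_union_le _ _)
    _ ≤ ∑ b ∈ S, μ (R b) + C * ∑ b ∈ S, μ (R b) := by
        refine add_le_add (measure_biUnion_finset_le _ _) ?_
        rw [← ρ_univ]
        refine measure_biUnion_le_of_nested h.measurableSet_parent nested fun a ha ↦ ?_
        rw [ρ_parent]
        exact (Finset.mem_filter.1 ha).2
    _ = (1 + C) * ∑ b ∈ S, μ (R b) := by ring

section WeakType

variable [IsFiniteMeasure μ] {f g : Ω → ℝ≥0∞} {t : ℝ≥0∞}

lemma mul_measure_biUnion_finset_le (h : IsDirectedCellFamily μ R Q lvl dir)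
    (hfg : ∀ x (n : ℕ), n ≠ 0 → f x * n ≤ g x + n ^ n) (ht : 12 ≤ t) (ht_top : t ≠ ∞)
    {T : Finset ι} (hmean : ∀ a ∈ T, t * μ (R a) ≤ ∫⁻ x in R a, f x ∂μ) :
    t * μ (⋃ a ∈ T, R a) ≤ 26 * ∫⁻ x, g x ∂μ := by
  obtain ⟨S, hST, hS, -, hcover⟩ := h.exists_subset_hasPoissonOverlap 12 T
  calc t * μ (⋃ a ∈ T, R a) ≤ t * ((1 + 12) * ∑ b ∈ S, μ (R b)) := by
        gcongr
        exact h.measure_biUnion_le hcover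
    _ = 13 * (t * ∑ b ∈ S, μ (R b)) := by ring
    _ ≤ 13 * (2 * ∫⁻ x, g x ∂μ) :=
        mul_le_mul_right (hS.mul_sum_measure_le h.measurableSet_cell hfg ht ht_top
          fun a ha ↦ hmean a (hST ha)) _
    _ = 26 * ∫⁻ x, g x ∂μ := by ring

lemma mul_measure_biUnion_le (h : IsDirectedCellFamily μ R Q lvl dir)
    (hfg : ∀ x (n : ℕ), n ≠ 0 → f x * n ≤ g x + n ^ n) (ht : 12 ≤ t) (ht_top : t ≠ ∞)
    {T : Set ι} (hT : (R '' T).Countable) (hmean : ∀ a ∈ T, t * μ (R a) ≤ ∫⁻ x in R a, f x ∂μ) :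
    t * μ (⋃ a ∈ T, R a) ≤ 26 * ∫⁻ x, g x ∂μ := by
  obtain ⟨T', hT'T, hbij⟩ := (surjOn_image R T).exists_bijOn_subset
  have countable : T'.Countable := countable_of_injective_of_countable_image hbij.injOn
    (hbij.image_eq ▸ hT)
  have := countable.to_subtype
  have biUnion_eq : ⋃ a ∈ T, R a = ⋃ F : Finset T', ⋃ a ∈ F, R a := by
    rw [← sUnion_image, ← hbij.image_eq, sUnion_image, biUnion_eq_iUnion, iUnion_eq_iUnion_finset]
  have directed : Directed (· ⊆ ·) fun F : Finset T' ↦ ⋃ a ∈ F, R a :=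
    Monotone.directed_le fun _ _ hF ↦ biUnion_subset_biUnion_left hF
  rw [biUnion_eq, directed.measure_iUnion, ENNReal.mul_iSup]
  refine iSup_le fun F ↦ ?_
  have := h.mul_measure_biUnion_finset_le hfg ht ht_top (T := F.map (Function.Embedding.subtype _))
    (by simpa using fun a ha _ ↦ hmean a (hT'T ha))
  simpa using this

end WeakType

end IsDirectedCellFamily

end Selection

section ProductMeasure

lemma isSubindepWithin_of_nested {Ω ι : Type*} [MeasurableSpace Ω] {μ : Measure Ω} {Q A : Set Ω}
    {R : ι → Set Ω} {J : Finset ι} (hA : A ⊆ Q) (hR : ∀ b ∈ J, Q ⊆ R b ∨ Disjoint Q (R b)) :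
    IsSubindepWithin μ Q A R J := by
  unfold IsSubindepWithin
  by_cases hQ : ∀ b ∈ J, Q ⊆ R b
  · have prod_eq : ∏ b ∈ J, μ (R b ∩ Q) = μ Q ^ #J :=
      Finset.prod_eq_pow_card fun b hb ↦ by rw [inter_eq_right.2 (hQ b hb)]
    rw [prod_eq, mul_comm]
    gcongr
    exact inter_subset_left
  · push Not at hQ
    obtain ⟨b, hb, hbQ⟩ := hQ
    have disjoint : Disjoint A (R b) := ((hR b hb).resolve_left hbQ).mono_left hA
    have inter_eq : A ∩ ⋂ c ∈ J, R c = ∅ :=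
      (disjoint.mono_right (biInter_subset_of_mem (Finset.mem_coe.2 hb))).inter_eq
    simp [inter_eq]

lemma isSubindepWithin_self_of_nested_of_ne {Ω ι : Type*} [MeasurableSpace Ω] {μ : Measure Ω}
    {Q : Set Ω} {R : ι → Set Ω} {J : Finset ι} {a : ι} (ha : a ∈ J)
    (hR : ∀ b ∈ J, b ≠ a → Q ⊆ R b ∨ Disjoint Q (R b)) : IsSubindepWithin μ Q Q R J := by
  classical
  obtain ⟨J, haJ, rfl⟩ : ∃ J', a ∉ J' ∧ insert a J' = J :=
    ⟨J.erase a, J.notMem_erase a, Finset.insert_erase ha⟩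
  have erased : IsSubindepWithin μ Q (Q ∩ R a) R J :=
    isSubindepWithin_of_nested inter_subset_left fun b hb ↦
      hR b (Finset.mem_insert_of_mem hb) (ne_of_mem_of_not_mem hb haJ)
  calc μ Q ^ #(insert a J) * μ (Q ∩ ⋂ b ∈ insert a J, R b)
      = μ Q * (μ Q ^ #J * μ ((Q ∩ R a) ∩ ⋂ b ∈ J, R b)) := by
        rw [Finset.card_insert_of_notMem haJ, Finset.set_biInter_insert, inter_assoc, pow_succ']
        ring
    _ ≤ μ Q * (μ (Q ∩ R a) * ∏ b ∈ J, μ (R b ∩ Q)) := mul_le_mul_right erased _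
    _ = μ Q * ∏ b ∈ insert a J, μ (R b ∩ Q) := by
        rw [Finset.prod_insert haJ, inter_comm]

lemma pi_subset_or_disjoint {κ : Type*} {X : κ → Type*} {s : Set κ} {A B : (i : κ) → Set (X i)}
    (h : ∀ i ∈ s, A i ⊆ B i ∨ Disjoint (A i) (B i)) :
    s.pi A ⊆ s.pi B ∨ Disjoint (s.pi A) (s.pi B) := by
  by_cases hsub : ∀ i ∈ s, A i ⊆ B i
  · exact .inl (pi_mono hsub)
  · push Not at hsub
    obtain ⟨i, hi, hAB⟩ := hsub
    exact .inr <| disjoint_left.2 fun x hxA hxB ↦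
      disjoint_left.1 ((h i hi).resolve_left hAB) (hxA i hi) (hxB i hi)

variable {κ ι : Type*} {X : κ → Type*} [∀ i, MeasurableSpace (X i)] {ν : (i : κ) → Measure (X i)}
  [∀ i, IsProbabilityMeasure (ν i)] {s : Finset κ} {A Q : (i : κ) → Set (X i)}
  {B : ι → (i : κ) → Set (X i)} {J : Finset ι}

lemma isSubindepWithin_infinitePi (hA : ∀ i, MeasurableSet (A i)) (hQ : ∀ i, MeasurableSet (Q i))
    (hB : ∀ b i, MeasurableSet (B b i))
    (h : ∀ i ∈ s, IsSubindepWithin (ν i) (Q i) (A i) (fun b ↦ B b i) J) :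
    IsSubindepWithin (Measure.infinitePi ν) ((s : Set κ).pi Q) ((s : Set κ).pi A)
      (fun b ↦ (s : Set κ).pi (B b)) J := by
  have inter_eq : (s : Set κ).pi A ∩ ⋂ b ∈ J, (s : Set κ).pi (B b) =
      (s : Set κ).pi fun i ↦ A i ∩ ⋂ b ∈ J, B b i := by
    ext x
    simp only [mem_inter_iff, mem_iInter, mem_pi]
    grind
  have measurable_inter (i : κ) : MeasurableSet (A i ∩ ⋂ b ∈ J, B b i) :=
    (hA i).inter (Finset.measurableSet_biInter J fun b _ ↦ hB b i)
  unfold IsSubindepWithin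
  simp_rw [inter_eq, ← pi_inter_distrib]
  rw [Measure.infinitePi_pi _ fun i _ ↦ hQ i, Measure.infinitePi_pi _ fun i _ ↦ hA i,
    Measure.infinitePi_pi _ fun i _ ↦ measurable_inter i]
  simp_rw [Measure.infinitePi_pi ν fun i _ ↦ (hB _ i).inter (hQ i)]
  rw [← Finset.prod_pow, ← Finset.prod_mul_distrib, Finset.prod_comm, ← Finset.prod_mul_distrib]
  exact Finset.prod_le_prod' h

lemma isSubindepWithin_infinitePi_of_nested {dir : ι → κ} {j : κ} (hA : ∀ i, MeasurableSet (A i))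
    (hQ : ∀ i, MeasurableSet (Q i)) (hB : ∀ b i, MeasurableSet (B b i)) (hAQ : A j ⊆ Q j)
    (hAQ_eq : ∀ i, i ≠ j → A i = Q i)
    (hnested : ∀ b ∈ J, ∀ i ∈ s, i ≠ dir b → Q i ⊆ B b i ∨ Disjoint (Q i) (B b i))
    (hdir : ∀ b ∈ J, dir b ≠ j) (hinj : InjOn dir J) :
    IsSubindepWithin (Measure.infinitePi ν) ((s : Set κ).pi Q) ((s : Set κ).pi A)
      (fun b ↦ (s : Set κ).pi (B b)) J := by
  refine isSubindepWithin_infinitePi hA hQ hB fun i hi ↦ ?_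
  by_cases hij : ∃ a ∈ J, dir a = i
  · obtain ⟨a, ha, rfl⟩ := hij
    rw [hAQ_eq _ (hdir a ha)]
    exact isSubindepWithin_self_of_nested_of_ne ha fun b hb hba ↦
      hnested b hb _ hi fun hab ↦ hba (hinj hb ha hab.symm)
  · push Not at hij
    have subset : A i ⊆ Q i := by
      rcases eq_or_ne i j with rfl | hne
      exacts [hAQ, (hAQ_eq i hne).subset]
    exact isSubindepWithin_of_nested subset fun b hb ↦ hnested b hb i hi (hij b hb).symm

end ProductMeasure

section Grid

/-- The index `v ∈ {0, …, N - 1}` of the arc `[v / N, (v + 1) / N)` containing a point. -/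
noncomputable def arcIndex (N : ℕ) (x : Circle1) : ℕ :=
  ⌊N * (AddCircle.equivIco (1 : ℝ) 0 x : ℝ)⌋₊

lemma measurable_arcIndex (N : ℕ) : Measurable (arcIndex N) :=
  Nat.measurable_floor.comp <| (measurable_subtype_coe.comp
    (AddCircle.measurableEquivIco (1 : ℝ) 0).measurable).const_mul _

lemma arcIndex_one (x : Circle1) : arcIndex 1 x = 0 := by
  simpa [arcIndex, Nat.floor_eq_zero] using (AddCircle.equivIco (1 : ℝ) 0 x).2.2

lemma arcIndex_mul_div (N : ℕ) {c : ℕ} (hc : c ≠ 0) (x : Circle1) :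
    arcIndex (N * c) x / c = arcIndex N x := by
  unfold arcIndex
  rw [← Nat.floor_div_natCast]
  push_cast
  field_simp

lemma mem_circleIco_iff_arcIndex_eq {N v : ℕ} (hv : v < N) (x : Circle1) :
    x ∈ circleIco (v / N) ((v + 1) / N) ↔ arcIndex N x = v := by
  have hN : (0 : ℝ) < N := mod_cast hv.pos
  have mem_Ico_iff {r : ℝ} (hr : 0 ≤ r) : r ∈ Ico ((v : ℝ) / N) ((v + 1) / N) ↔ ⌊N * r⌋₊ = v := by
    rw [Nat.floor_eq_iff (by positivity), mem_Ico, div_le_iff₀' hN, lt_div_iff₀' hN]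
  constructor
  · rintro ⟨r, hr, rfl⟩
    have hr_nonneg : 0 ≤ r := le_trans (by positivity) hr.1
    have hr_lt : r < 0 + 1 := hr.2.trans_le <| by
      rw [zero_add, div_le_one hN]
      exact mod_cast hv
    rw [arcIndex, AddCircle.equivIco_coe_eq ⟨hr_nonneg, hr_lt⟩]
    exact (mem_Ico_iff hr_nonneg).1 hr
  · exact fun h ↦ ⟨AddCircle.equivIco (1 : ℝ) 0 x,
      (mem_Ico_iff (AddCircle.equivIco (1 : ℝ) 0 x).2.1).2 h, AddCircle.coe_equivIco⟩

/-- The arc of the grid of step `1 / N` containing `x`. -/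
def arc (N : ℕ) (x : Circle1) : Set Circle1 := {y | arcIndex N y = arcIndex N x}

lemma measurableSet_arc (N : ℕ) (x : Circle1) : MeasurableSet (arc N x) :=
  measurable_arcIndex N (measurableSet_singleton _)

lemma arc_one (x : Circle1) : arc 1 x = univ := by
  simp [arc, arcIndex_one]

lemma arc_subset_of_dvd {N N' : ℕ} (hN : N ≠ 0) (h : N' ∣ N) (x : Circle1) :
    arc N x ⊆ arc N' x := by
  obtain ⟨c, rfl⟩ := h
  intro y (hy : arcIndex _ y = arcIndex _ x)
  change arcIndex N' y = arcIndex N' x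
  rw [← arcIndex_mul_div N' (right_ne_zero_of_mul hN), hy,
    arcIndex_mul_div N' (right_ne_zero_of_mul hN)]

lemma arc_subset_or_disjoint_of_dvd {N N' : ℕ} (hN : N ≠ 0) (h : N' ∣ N) (x y : Circle1) :
    arc N x ⊆ arc N' y ∨ Disjoint (arc N x) (arc N' y) := by
  by_cases hxy : arcIndex N' x = arcIndex N' y
  · exact .inl fun z hz ↦ (arc_subset_of_dvd hN h x hz).trans hxy
  · exact .inr (disjoint_left.2 fun z hzx hzy ↦ hxy ((arc_subset_of_dvd hN h x hzx).symm.trans hzy))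

variable {s : Finset ℕ} {N N' : ℕ → ℕ}

/-- The box around `x` whose side in each direction `c ∈ s` is an arc of length `1 / N c`. -/
def gridBox (s : Finset ℕ) (N : ℕ → ℕ) (x : Tinf) : Set Tinf :=
  (s : Set ℕ).pi fun c ↦ arc (N c) (x c)

lemma measurableSet_gridBox (s : Finset ℕ) (N : ℕ → ℕ) (x : Tinf) :
    MeasurableSet (gridBox s N x) :=
  .pi s.countable_toSet fun c _ ↦ measurableSet_arc (N c) (x c)

lemma gridBox_subset_of_dvd (hN : ∀ c ∈ s, N c ≠ 0) (h : ∀ c ∈ s, N' c ∣ N c) (x : Tinf) :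
    gridBox s N x ⊆ gridBox s N' x :=
  pi_mono fun c hc ↦ arc_subset_of_dvd (hN c hc) (h c hc) (x c)

lemma gridBox_subset_or_disjoint_of_dvd (hN : ∀ c ∈ s, N c ≠ 0) (h : ∀ c ∈ s, N' c ∣ N c)
    (x y : Tinf) : gridBox s N x ⊆ gridBox s N' y ∨ Disjoint (gridBox s N x) (gridBox s N' y) :=
  pi_subset_or_disjoint fun c hc ↦ arc_subset_or_disjoint_of_dvd (hN c hc) (h c hc) (x c) (y c)

lemma gridBox_eq_univ_pi (h : ∀ c ∉ s, N c = 1) (x : Tinf) :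
    gridBox s N x = univ.pi fun c ↦ arc (N c) (x c) := by
  refine Subset.antisymm (fun y hy c _ ↦ ?_) (pi_mono' (fun _ _ ↦ subset_rfl) (subset_univ _))
  by_cases hc : c ∈ s
  · exact hy c hc
  · simp [h c hc, arc_one]

lemma countable_range_gridBox (s : Finset ℕ) (N : ℕ → ℕ) : (range (gridBox s N)).Countable := by
  refine (countable_range fun v : s → ℕ ↦ {y : Tinf | ∀ c : s, arcIndex (N c) (y c) = v c}).mono ?_
  rintro _ ⟨x, rfl⟩
  exact ⟨fun c ↦ arcIndex (N c) (x c), by ext y; simp [gridBox, arc]⟩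

end Grid

section Cells

lemma prime_nthPrime (c : ℕ) : (nthPrime c).Prime := Nat.prime_nth_prime c

lemma nthPrime_injective : Function.Injective nthPrime :=
  Nat.nth_injective Nat.infinite_setOfPred_prime

lemma lt_nthPrime (c : ℕ) : c < nthPrime c :=
  (Nat.lt_add_of_pos_right two_pos).trans_le (Nat.add_two_le_nth_prime c)

lemma factorization_prod_nthPrime_pow (s : Finset ℕ) (e : ℕ → ℕ) (c : ℕ) :
    (∏ i ∈ s, nthPrime i ^ e i).factorization (nthPrime c) = if c ∈ s then e c else 0 := by
  rw [Nat.factorization_prod fun i _ ↦ pow_ne_zero _ (prime_nthPrime i).ne_zero]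
  simp [(prime_nthPrime _).factorization, Finsupp.single_apply, nthPrime_injective.eq_iff]

/-- The power of `p_c = nthPrime c` (numbered from `0`) dividing `l`, divided by `p_c` if `c ∈ A`
and if this is possible. For `∏ c ∈ A, p_c ∣ l` these are the prime powers in the factorization of
`l / ∏ c ∈ A, p_c`. -/
noncomputable def loweredModulus (l : ℕ) (A : Finset ℕ) (c : ℕ) : ℕ :=
  nthPrime c ^ (l.factorization (nthPrime c) - if c ∈ A then 1 else 0)

variable {l : ℕ} {A A' : Finset ℕ}

lemma loweredModulus_ne_zero (l : ℕ) (A : Finset ℕ) (c : ℕ) : loweredModulus l A c ≠ 0 :=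
  pow_ne_zero _ (prime_nthPrime c).ne_zero

lemma loweredModulus_dvd {c : ℕ} (h : c ∈ A → c ∈ A') :
    loweredModulus l A' c ∣ loweredModulus l A c := by
  refine pow_dvd_pow _ (Nat.sub_le_sub_left ?_ _)
  split_ifs <;> grind

lemma loweredModulus_congr {c : ℕ} (h : c ∈ A ↔ c ∈ A') :
    loweredModulus l A c = loweredModulus l A' c := by
  simp only [loweredModulus, h]

lemma loweredModulus_eq_one {c : ℕ} (hc : c ∉ Finset.range l) : loweredModulus l A c = 1 := by
  have factorization_eq_zero : l.factorization (nthPrime c) = 0 :=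
    Nat.factorization_eq_zero_of_lt <|
      (not_lt.1 fun h ↦ hc (Finset.mem_range.2 h)).trans_lt (lt_nthPrime c)
  rw [loweredModulus, factorization_eq_zero, Nat.zero_sub, pow_zero]

/-- The rectangle `B_m` around `x` with `m = l / (p_0 ⋯ p̌_j ⋯ p_{k-1})`, indexed by `(k, j, x)`. -/
noncomputable def Ecell (l : ℕ) (a : ℕ × ℕ × Tinf) : Set Tinf :=
  gridBox (Finset.range l) (loweredModulus l (Finset.range a.1 \ {a.2.1})) a.2.2

/-- The rectangle obtained from `Ecell l a` by removing the last factor `p_j` from `m` as well. -/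
noncomputable def EcellParent (l : ℕ) (a : ℕ × ℕ × Tinf) : Set Tinf :=
  gridBox (Finset.range l) (loweredModulus l (Finset.range a.1)) a.2.2

lemma isDirectedCellFamily_Ecell (ν : ℕ → Measure Circle1) [∀ i, IsProbabilityMeasure (ν i)]
    (l : ℕ) :
    IsDirectedCellFamily (Measure.infinitePi ν) (Ecell l) (EcellParent l) Prod.fst
      (fun a ↦ a.2.1) where
  measurableSet_cell _ := measurableSet_gridBox ..
  measurableSet_parent _ := measurableSet_gridBox ..
  cell_subset_parent a :=
    gridBox_subset_of_dvd (fun c _ ↦ loweredModulus_ne_zero _ _ _)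
      (fun c _ ↦ loweredModulus_dvd fun hc ↦ Finset.sdiff_subset hc) a.2.2
  cell_nested {a b} hdir hlvl :=
    gridBox_subset_or_disjoint_of_dvd (fun c _ ↦ loweredModulus_ne_zero _ _ _)
      (fun c _ ↦ loweredModulus_dvd fun hc ↦ hdir ▸ Finset.sdiff_subset_sdiff
        (Finset.range_mono hlvl) subset_rfl hc) a.2.2 b.2.2
  parent_nested {a b} hlvl :=
    gridBox_subset_or_disjoint_of_dvd (fun c _ ↦ loweredModulus_ne_zero _ _ _)
      (fun c _ ↦ loweredModulus_dvd fun hc ↦ Finset.range_mono hlvl hc) a.2.2 b.2.2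
  isSubindepWithin_parent {a J} hJ hinj := by
    refine isSubindepWithin_infinitePi_of_nested (j := a.2.1) (fun c ↦ measurableSet_arc ..)
      (fun c ↦ measurableSet_arc ..) (fun b c ↦ measurableSet_arc ..) ?_ (fun c hc ↦ ?_)
      (fun b hb c _ hc ↦ ?_) (fun b hb ↦ (hJ b hb).2) hinj
    · exact arc_subset_of_dvd (loweredModulus_ne_zero _ _ _)
        (loweredModulus_dvd fun hc ↦ Finset.sdiff_subset hc) _
    · exact congr_arg (arc · (a.2.2 c)) (loweredModulus_congr (by simp [hc]))
    · refine arc_subset_or_disjoint_of_dvd (loweredModulus_ne_zero _ _ _)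
        (loweredModulus_dvd fun hca ↦ ?_) _ _
      exact Finset.mem_sdiff.2 ⟨Finset.range_mono (hJ b hb).1 hca, by simpa using hc⟩

lemma countable_range_Ecell (l : ℕ) : (range (Ecell l)).Countable := by
  refine (countable_iUnion fun k ↦ countable_iUnion fun j ↦ countable_range_gridBox
    (Finset.range l) (loweredModulus l (Finset.range k \ {j}))).mono ?_
  rintro _ ⟨⟨k, j, x⟩, rfl⟩
  exact mem_iUnion₂.2 ⟨k, j, x, rfl⟩

lemma Rect_eq_gridBox {d : ℕ} {N : ℕ → ℕ} {L j : Fin d → ℕ}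
    (hN : ∀ k : Fin d, N k = nthPrime k ^ L k) (hj : ∀ k : Fin d, j k < nthPrime k ^ L k)
    {x : Tinf} (hx : x ∈ Rect d L j) :
    Rect d L j = gridBox (Finset.range d) N x := by
  have mem_Rect_iff (y : Tinf) : y ∈ Rect d L j ↔ ∀ k : Fin d, arcIndex (N k) (y k) = j k :=
    forall_congr' fun k ↦ by rw [mem_circleIco_iff_arcIndex_eq (hj k), hN]
  ext y
  simp only [mem_Rect_iff, gridBox, arc, mem_pi, Finset.coe_range, mem_Iio]
  exact ⟨fun hy c hc ↦ (hy ⟨c, hc⟩).trans ((mem_Rect_iff x).1 hx ⟨c, hc⟩).symm,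
    fun hy k ↦ (hy k k.2).trans ((mem_Rect_iff x).1 hx k)⟩

lemma exists_loweredModulus_eq_of_mem_divSet_Eset {d : ℕ} {L : Fin d → ℕ}
    (h : ∏ k, nthPrime k.val ^ L k ∈ divSet l Eset) :
    ∃ k j, (∀ i : Fin d, loweredModulus l (Finset.range k \ {j}) i = nthPrime i ^ L i) ∧
      ∀ c ∉ Finset.range d, loweredModulus l (Finset.range k \ {j}) c = 1 := by
  obtain ⟨hdvd, k, -, j, -, hquot⟩ := h
  set e : ℕ → ℕ := fun c ↦ if hc : c < d then L ⟨c, hc⟩ else 0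
  have e_val (i : Fin d) : e i = L i := by simp [e]
  have l_eq : l = (∏ c ∈ Finset.range d, nthPrime c ^ e c) *
      ∏ c ∈ Finset.range k \ {j}, nthPrime c ^ 1 := by
    simp_rw [pow_one, ← hquot, ← Fin.prod_univ_eq_prod_range (fun c ↦ nthPrime c ^ e c), e_val]
    exact (Nat.mul_div_cancel' hdvd).symm
  have factorization_eq (c : ℕ) : l.factorization (nthPrime c) =
      (if c ∈ Finset.range d then e c else 0) + if c ∈ Finset.range k \ {j} then 1 else 0 := by
    have prod_ne_zero (s : Finset ℕ) (e : ℕ → ℕ) : ∏ c ∈ s, nthPrime c ^ e c ≠ 0 :=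
      Finset.prod_ne_zero_iff.2 fun c _ ↦ pow_ne_zero _ (prime_nthPrime c).ne_zero
    rw [l_eq, Nat.factorization_mul (prod_ne_zero _ _) (prod_ne_zero _ _), Finsupp.add_apply,
      factorization_prod_nthPrime_pow, factorization_prod_nthPrime_pow]
  have modulus_eq (c : ℕ) : loweredModulus l (Finset.range k \ {j}) c =
      nthPrime c ^ (if c ∈ Finset.range d then e c else 0) := by
    rw [loweredModulus, factorization_eq, Nat.add_sub_cancel_right]
  exact ⟨k, j, fun i ↦ by simp [modulus_eq, e_val], fun c hc ↦ by simp [modulus_eq, hc]⟩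

lemma exists_Rect_eq_Ecell {d : ℕ} {L j : Fin d → ℕ}
    (hL : ∏ k, nthPrime k.val ^ L k ∈ divSet l Eset) (hj : ∀ k, j k < nthPrime k.val ^ L k)
    {x : Tinf} (hx : x ∈ Rect d L j) : ∃ k j', Rect d L j = Ecell l (k, j', x) := by
  obtain ⟨k, j', hd, hd_compl⟩ := exists_loweredModulus_eq_of_mem_divSet_Eset hL
  refine ⟨k, j', ?_⟩
  rw [Rect_eq_gridBox hd hj hx, Ecell, gridBox_eq_univ_pi hd_compl,
    gridBox_eq_univ_pi fun c hc ↦ loweredModulus_eq_one hc]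

lemma exists_Ecell_mul_le_setLIntegral_of_lt_MMax {μ : Measure Tinf} {f : Tinf → ℝ} {x : Tinf}
    {t : ℝ≥0∞} (h : t < MMax μ (divSet l Eset) f x) :
    ∃ k j, t * μ (Ecell l (k, j, x)) ≤ ∫⁻ y in Ecell l (k, j, x), ‖f y‖₊ ∂μ := by
  simp only [MMax, lt_iSup_iff] at h
  obtain ⟨d, L, i, hL, hi, hx, hlt⟩ := h
  obtain ⟨k, j, hcell⟩ := exists_Rect_eq_Ecell hL hi hx
  rw [hcell, mul_comm, ← div_eq_mul_inv] at hlt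
  exact ⟨k, j, ENNReal.mul_le_of_le_div hlt.le⟩

end Cells

section Young

lemma alphaFn_strictMono : StrictMono alphaFn := by
  intro x y hxy
  unfold alphaFn
  split_ifs with hx hy hy
  · calc x ^ (x - 1) ≤ y ^ (x - 1) := Real.rpow_le_rpow (by linarith) hxy.le (by linarith)
      _ < y ^ (y - 1) := Real.rpow_lt_rpow_of_exponent_lt hy (by linarith)
  · exact absurd (hx.trans hxy) hy
  · exact (not_lt.1 hx).trans_lt (Real.one_lt_rpow hy (by linarith))
  · exact hxy

lemma alphaFn_surjective : Function.Surjective alphaFn := by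
  intro y
  rcases le_or_gt y 1 with hy | hy
  · exact ⟨y, if_neg hy.not_gt⟩
  have continuousOn : ContinuousOn (fun x : ℝ ↦ x ^ (x - 1)) (Icc 1 (y + 1)) :=
    continuousOn_id.rpow (by fun_prop) fun x hx ↦ .inl (zero_lt_one.trans_le hx.1).ne'
  have le_rpow : y ≤ (y + 1) ^ (y + 1 - 1) :=
    calc y ≤ (y + 1) ^ (1 : ℝ) := by rw [Real.rpow_one]; linarith
      _ ≤ (y + 1) ^ (y + 1 - 1) := Real.rpow_le_rpow_of_exponent_le (by linarith) (by linarith)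
  obtain ⟨x, hx, rfl⟩ := intermediate_value_Icc (by linarith) continuousOn
    (show y ∈ Icc _ _ from ⟨by simpa using hy.le, le_rpow⟩)
  have hx_gt : 1 < x := hx.1.lt_of_ne <| by
    rintro rfl
    simp at hy
  exact ⟨x, if_pos hx_gt⟩

lemma alphaFn_alphaInv (y : ℝ) : alphaFn (alphaInv y) = y :=
  Function.rightInverse_invFun alphaFn_surjective y

lemma alphaInv_alphaFn (x : ℝ) : alphaInv (alphaFn x) = x :=
  Function.leftInverse_invFun alphaFn_strictMono.injective x

lemma alphaInv_monotone : Monotone alphaInv := fun y z hyz ↦ by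
  rwa [← alphaFn_strictMono.le_iff_le, alphaFn_alphaInv, alphaFn_alphaInv]

lemma alphaInv_zero : alphaInv 0 = 0 := by
  simpa [alphaFn] using alphaInv_alphaFn 0

lemma natCast_mul_alphaFn {n : ℕ} (hn : n ≠ 0) : n * alphaFn n = (n : ℝ) ^ n := by
  have hn_pos : (0 : ℝ) < n := mod_cast Nat.pos_of_ne_zero hn
  unfold alphaFn
  split_ifs with h
  · rw [Real.rpow_sub_one hn_pos.ne', Real.rpow_natCast, mul_div_cancel₀ _ hn_pos.ne']
  · obtain rfl : n = 1 := by
      rw [Nat.one_lt_cast] at h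
      omega
    simp

lemma mul_le_integral_add_mul {φ : ℝ → ℝ} (hφ : Monotone φ) (hφ_zero : 0 ≤ φ 0) {x y : ℝ}
    (hy : 0 ≤ y) : x * φ y ≤ (∫ t in (0 : ℝ)..x, φ t) + y * φ y := by
  have integral_ge : (x - y) * φ y ≤ ∫ t in y..x, φ t := by
    rcases le_total y x with hyx | hxy
    · simpa using intervalIntegral.integral_mono_on (μ := volume) hyx intervalIntegrable_const
        hφ.intervalIntegrable fun t ht ↦ hφ ht.1
    · have integral_le : ∫ t in x..y, φ t ≤ (y - x) * φ y := by
        simpa using intervalIntegral.integral_mono_on (μ := volume) hxy hφ.intervalIntegrable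
          intervalIntegrable_const fun t ht ↦ hφ ht.2
      rw [intervalIntegral.integral_symm]
      linarith
  have integral_nonneg : 0 ≤ ∫ t in (0 : ℝ)..y, φ t :=
    intervalIntegral.integral_nonneg hy fun t ht ↦ hφ_zero.trans (hφ ht.1)
  have integral_split := intervalIntegral.integral_add_adjacent_intervals (μ := volume)
    (hφ.intervalIntegrable (a := 0) (b := y)) (hφ.intervalIntegrable (a := y) (b := x))
  linarith

lemma abs_mul_natCast_le_PhiStar_add_pow (x : ℝ) {n : ℕ} (hn : n ≠ 0) :
    |x| * n ≤ PhiStar x + (n : ℝ) ^ n := by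
  have alphaFn_nonneg : 0 ≤ alphaFn n := by
    simpa [alphaFn] using alphaFn_strictMono.monotone n.cast_nonneg
  have := mul_le_integral_add_mul alphaInv_monotone alphaInv_zero.ge (x := |x|) alphaFn_nonneg
  rwa [alphaInv_alphaFn, mul_comm (alphaFn n), natCast_mul_alphaFn hn] at this

lemma nnnorm_mul_natCast_le_PhiStar_add_pow (x : ℝ) {n : ℕ} (hn : n ≠ 0) :
    (‖x‖₊ : ℝ≥0∞) * n ≤ ENNReal.ofReal (PhiStar |x|) + (n : ℝ≥0∞) ^ n :=
  calc (‖x‖₊ : ℝ≥0∞) * n = ENNReal.ofReal (|x| * n) := by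
        rw [ENNReal.ofReal_mul (abs_nonneg x), ENNReal.ofReal_natCast, ← Real.norm_eq_abs,
          ofReal_norm, enorm_eq_nnnorm]
    _ ≤ ENNReal.ofReal (PhiStar |x| + (n : ℝ) ^ n) := by
        gcongr
        simpa using abs_mul_natCast_le_PhiStar_add_pow |x| hn
    _ ≤ ENNReal.ofReal (PhiStar |x|) + (n : ℝ≥0∞) ^ n := by
        rw [← ENNReal.ofReal_natCast n, ← ENNReal.ofReal_pow n.cast_nonneg]
        exact ENNReal.ofReal_add_le

end Young

instance isProbabilityMeasure_volume_circle : IsProbabilityMeasure (volume : Measure Circle1) :=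
  ⟨by simp [AddCircle.measure_univ]⟩

lemma IsProductLebesgue.eq_infinitePi {μ : Measure Tinf} (hμ : IsProductLebesgue μ) :
    μ = Measure.infinitePi fun _ ↦ (volume : Measure Circle1) :=
  Measure.eq_infinitePi _ hμ.2

lemma mul_measure_lt_MMax_le (ν : ℕ → Measure Circle1) [∀ i, IsProbabilityMeasure (ν i)] (l : ℕ)
    (f : Tinf → ℝ) {t : ℝ≥0∞} (ht : 12 ≤ t) (ht_top : t ≠ ∞) :
    t * Measure.infinitePi ν {x | t < MMax (Measure.infinitePi ν) (divSet l Eset) f x} ≤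
      26 * ∫⁻ y, ENNReal.ofReal (PhiStar |f y|) ∂Measure.infinitePi ν := by
  set μ := Measure.infinitePi ν
  set T : Set (ℕ × ℕ × Tinf) := {a | t * μ (Ecell l a) ≤ ∫⁻ y in Ecell l a, ‖f y‖₊ ∂μ}
  have covered : {x | t < MMax μ (divSet l Eset) f x} ⊆ ⋃ a ∈ T, Ecell l a := fun x hx ↦ by
    obtain ⟨k, j, hmean⟩ := exists_Ecell_mul_le_setLIntegral_of_lt_MMax hx
    exact mem_iUnion₂.2 ⟨(k, j, x), hmean, fun _ _ ↦ rfl⟩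
  calc t * μ {x | t < MMax μ (divSet l Eset) f x} ≤ t * μ (⋃ a ∈ T, Ecell l a) := by gcongr
    _ ≤ 26 * ∫⁻ y, ENNReal.ofReal (PhiStar |f y|) ∂μ :=
      (isDirectedCellFamily_Ecell ν l).mul_measure_biUnion_le
        (fun x _ ↦ nnnorm_mul_natCast_le_PhiStar_add_pow (f x)) ht ht_top
        ((countable_range_Ecell l).mono (image_subset_range _ _)) fun _ ha ↦ ha

theorem rect_maximal_weak_type_Eset_general (ν : ℕ → Measure Circle1)
    [∀ i, IsProbabilityMeasure (ν i)] (l : ℕ) (f : Tinf → ℝ) {lam : ℝ} (hlam : 0 < lam) :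
    Measure.infinitePi ν
        {x | ENNReal.ofReal lam < MMax (Measure.infinitePi ν) (divSet l Eset) f x} ≤
      ENNReal.ofReal (26 / lam) *
        (1 + ∫⁻ t, ENNReal.ofReal (PhiStar |f t|) ∂Measure.infinitePi ν) := by
  set μ := Measure.infinitePi ν
  set t := ENNReal.ofReal lam
  rcases lt_or_ge lam 12 with hlt | hge
  · calc μ {x | t < MMax μ (divSet l Eset) f x} ≤ 1 := prob_le_one
      _ ≤ ENNReal.ofReal (26 / lam) :=
        ENNReal.one_le_ofReal.2 ((one_le_div hlam).2 (by linarith))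
      _ ≤ _ := le_mul_of_one_le_right' le_self_add
  have ht : 12 ≤ t := by simpa [t] using ENNReal.ofReal_le_ofReal hge
  calc μ {x | t < MMax μ (divSet l Eset) f x}
      ≤ 26 * (∫⁻ y, ENNReal.ofReal (PhiStar |f y|) ∂μ) / t := by
        rw [ENNReal.le_div_iff_mul_le (.inl (ENNReal.ofReal_pos.2 hlam).ne')
          (.inl ENNReal.ofReal_ne_top), mul_comm]
        exact mul_measure_lt_MMax_le ν l f ht ENNReal.ofReal_ne_top
    _ = ENNReal.ofReal (26 / lam) * ∫⁻ y, ENNReal.ofReal (PhiStar |f y|) ∂μ := by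
        rw [ENNReal.ofReal_div_of_pos hlam, ENNReal.ofReal_ofNat, ENNReal.mul_div_right_comm]
    _ ≤ ENNReal.ofReal (26 / lam) * (1 + ∫⁻ y, ENNReal.ofReal (PhiStar |f y|) ∂μ) :=
        mul_le_mul_right le_add_self _

/-- **Weak type inequality for the rectangle maximal function of `E` (Lemma 6).** There is
an absolute constant `C > 0` such that for every `l`, every `f ∈ L^{Φ*}(𝕋^∞)` and every
`λ > 0`, `λ({ℳ_{l/E} f > λ}) ≤ (C/λ)(1 + ∫ Φ*(|f|) dλ)`. -/
theorem rect_maximal_weak_type_Eset :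
    ∃ C : ℝ, 0 < C ∧
      ∀ (μ : Measure Tinf), IsProductLebesgue μ →
        ∀ l : ℕ, ∀ f : Tinf → ℝ, Measurable f →
          (∫⁻ x, ENNReal.ofReal (PhiStar |f x|) ∂μ) < ⊤ →
          ∀ lam : ℝ, 0 < lam →
            μ {x : Tinf | ENNReal.ofReal lam < MMax μ (divSet l Eset) f x} ≤
              ENNReal.ofReal (C / lam) *
                (1 + ∫⁻ t, ENNReal.ofReal (PhiStar |f t|) ∂μ) :=
  ⟨26, by norm_num, fun μ hμ l f _ _ _ hlam ↦ by
    rw [hμ.eq_infinitePi]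
    exact rect_maximal_weak_type_Eset_general _ l f hlam⟩
end

section
/- Let D ⊆ ℕ be a set of indices and φ : ℝ⁺ → ℝ⁺ a convex increasing function. If there exists f ∈ L^φ(𝕋) such that ℛ_D f(x) = ∞ on a set of positive Lebesgue measure, then there exists f̃ ∈ L^φ(𝕋) such that ℛ_D f̃(x) = ∞ for every x ∈ 𝕋. -/
open MeasureTheory Set

/-- The Riemann sum operator `R_n f(x) = (1/n) ∑_{k=0}^{n-1} f(x + k/n)`. -/
noncomputable def RiemannSum (n : ℕ) (f : Circle1 → ℝ) (x : Circle1) : ℝ :=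
  (n : ℝ)⁻¹ * ∑ k ∈ Finset.range n, f (x + (((k : ℝ) / (n : ℝ) : ℝ) : Circle1))

/-- The Riemann maximal function `ℛ_D f(x) = sup_{n ∈ D} R_n|f|(x)` (valued in `[0,∞]`). -/
noncomputable def RMax (D : Set ℕ) (f : Circle1 → ℝ) (x : Circle1) : ENNReal :=
  ⨆ (n : ℕ) (_ : n ∈ D), ENNReal.ofReal (RiemannSum n (fun y => |f y|) x)

/- Since `R_n` averages over translates by rational points, everything happens on orbits of the
countable group of rational points, which acts ergodically. Almost every orbit therefore meets
`{ℛ_D f = ∞}`, and it suffices to dominate all rational translates of `f`, up to additive constants,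
by a single function of `L^Φ`. The supremum of the translates of `f`, the one by `g` being set to
`0` where it is at most `M g`, has this property as soon as the `M g` grow fast enough: by
Borel–Cantelli only finitely many terms are nonzero at almost every point. The exceptional points
are enclosed in a null set that is a union of orbits, where `‖·‖⁻²` takes over; its Riemann sums
diverge everywhere because some `x + k/n` lies at distance at most `1/n` from `0`. -/

open Filter Topology
open scoped NNReal ENNReal

section LevelSets

theorem tendsto_measure_setOf_lt_atTop {X : Type*} [MeasurableSpace X] (μ : Measure X)
    [IsFiniteMeasure μ] {f : X → ℝ≥0} (hf : Measurable f) :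
    Tendsto (fun M : ℝ≥0 => μ {x | M < f x}) atTop (𝓝 0) := by
  have hempty : ⋂ M : ℝ≥0, {x | M < f x} = ∅ :=
    eq_empty_of_forall_notMem fun x hx => lt_irrefl (f x) (mem_iInter.1 hx (f x))
  have hanti : Antitone fun M : ℝ≥0 => {x | M < f x} := fun M N hMN x hx => hMN.trans_lt hx
  simpa only [hempty, measure_empty] using! tendsto_measure_iInter_atTop (μ := μ)
    (fun M => (measurableSet_lt measurable_const hf).nullMeasurableSet) hanti
    ⟨0, measure_ne_top _ _⟩

theorem exists_measure_le_and_setLIntegral_le {X : Type*} [MeasurableSpace X] {μ : Measure X}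
    [IsFiniteMeasure μ] {f : X → ℝ≥0} (hf : Measurable f) {g : X → ℝ≥0∞}
    (hg : ∫⁻ x, g x ∂μ ≠ ∞) {ε : ℝ≥0∞} (hε : ε ≠ 0) :
    ∃ M : ℝ≥0, μ {x | M < f x} ≤ ε ∧ ∫⁻ x in {x | M < f x}, g x ∂μ ≤ ε := by
  have := isFiniteMeasure_withDensity hg
  have hsmall := tendsto_measure_setOf_lt_atTop (μ + μ.withDensity g) hf
  obtain ⟨M, hM⟩ := (hsmall.eventually_lt_const hε.bot_lt).exists
  rw [Measure.add_apply, withDensity_apply _ (measurableSet_lt measurable_const hf)] at hM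
  exact ⟨M, le_self_add.trans hM.le, le_add_self.trans hM.le⟩

theorem finite_range_indicator {ι α : Type*} [Zero α] {s : Set ι} (hs : s.Finite) (v : ι → α) :
    (range (s.indicator v)).Finite :=
  (((hs.subset support_indicator_subset).image _).insert 0).subset
    (Function.range_subset_insert_image_support _)

theorem comp_iSup_indicator_le {ι : Type*} [Nonempty ι] {s : Set ι} (hs : s.Finite) (v : ι → ℝ≥0)
    (Φ : ℝ≥0 → ℝ≥0∞) :
    Φ (⨆ i, s.indicator v i) ≤ Φ 0 + ∑' i, s.indicator (Φ ∘ v) i := by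
  obtain ⟨i, hi⟩ : ⨆ i, s.indicator v i ∈ range (s.indicator v) :=
    (range_nonempty _).csSup_mem (finite_range_indicator hs v)
  rw [← hi]
  by_cases his : i ∈ s
  · calc Φ (s.indicator v i) = s.indicator (Φ ∘ v) i := by simp [his]
      _ ≤ ∑' i, s.indicator (Φ ∘ v) i := ENNReal.le_tsum i
      _ ≤ Φ 0 + ∑' i, s.indicator (Φ ∘ v) i := le_add_self
  · simp [his]

theorem lintegral_comp_iSup_indicator_le {ι X : Type*} [Countable ι] [Nonempty ι]
    [MeasurableSpace X] {μ : Measure X} {A : ι → Set X} (hA : ∀ i, MeasurableSet (A i))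
    (hfin : ∀ᵐ x ∂μ, {i | x ∈ A i}.Finite) {v : ι → X → ℝ≥0} (hv : ∀ i, Measurable (v i))
    {Φ : ℝ≥0 → ℝ≥0∞} (hΦ : Measurable Φ) :
    ∫⁻ x, Φ (⨆ i, (A i).indicator (v i) x) ∂μ ≤
      Φ 0 * μ univ + ∑' i, ∫⁻ x in A i, Φ (v i x) ∂μ := by
  have hmeas (i : ι) : AEMeasurable ((A i).indicator fun x => Φ (v i x)) μ :=
    ((hΦ.comp (hv i)).indicator (hA i)).aemeasurable
  calc ∫⁻ x, Φ (⨆ i, (A i).indicator (v i) x) ∂μ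
      ≤ ∫⁻ x, (Φ 0 + ∑' i, (A i).indicator (fun x => Φ (v i x)) x) ∂μ :=
        lintegral_mono_ae (hfin.mono fun x hx => comp_iSup_indicator_le hx (v · x) Φ)
    _ = Φ 0 * μ univ + ∑' i, ∫⁻ x, (A i).indicator (fun x => Φ (v i x)) x ∂μ := by
        rw [lintegral_add_left measurable_const, lintegral_const, lintegral_tsum hmeas]
    _ = Φ 0 * μ univ + ∑' i, ∫⁻ x in A i, Φ (v i x) ∂μ := by
        simp only [lintegral_indicator (hA _)]

end LevelSets

section GroupAction

variable {G X : Type*} [AddGroup G] [AddAction G X]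

theorem vadd_mem_iUnion_preimage_vadd_iff (s : Set X) (g : G) (x : X) :
    g +ᵥ x ∈ ⋃ h : G, (h +ᵥ ·) ⁻¹' s ↔ x ∈ ⋃ h : G, (h +ᵥ ·) ⁻¹' s := by
  simp only [mem_iUnion, mem_preimage, vadd_vadd]
  exact ((Equiv.addRight g).surjective.exists (p := fun h => h +ᵥ x ∈ s)).symm

variable [Countable G] [MeasurableSpace X] [MeasurableConstVAdd G X] {μ : Measure X}

theorem exists_measurable_vadd_invariant_superset_of_null [VAddInvariantMeasure G X μ] {s : Set X}
    (hs : μ s = 0) :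
    ∃ t, s ⊆ t ∧ MeasurableSet t ∧ μ t = 0 ∧ ∀ (g : G) (x : X), g +ᵥ x ∈ t ↔ x ∈ t := by
  obtain ⟨t, hst, htm, ht⟩ := exists_measurable_superset_of_null hs
  exact ⟨⋃ g : G, (g +ᵥ ·) ⁻¹' t, fun x hx => mem_iUnion.2 ⟨0, by simpa using hst hx⟩,
    .iUnion fun g => measurable_const_vadd g htm,
    measure_iUnion_null fun g => by rwa [measure_preimage_vadd],
    vadd_mem_iUnion_preimage_vadd_iff t⟩

theorem ae_exists_vadd_mem [ErgodicVAdd G X μ] {s : Set X} (hs : MeasurableSet s) (hμs : μ s ≠ 0) :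
    ∀ᵐ x ∂μ, ∃ g : G, g +ᵥ x ∈ s := by
  set S : Set X := ⋃ g : G, (g +ᵥ ·) ⁻¹' s
  have hSm : MeasurableSet S := .iUnion fun g => measurable_const_vadd g hs
  have hsS : s ⊆ S := fun x hx => mem_iUnion.2 ⟨0, by simpa using hx⟩
  have hinv (g : G) : (g +ᵥ ·) ⁻¹' S = S := Set.ext (vadd_mem_iUnion_preimage_vadd_iff s g)
  have hconst := aeconst_of_forall_preimage_vadd_ae_eq G hSm.nullMeasurableSet
    fun g => (hinv g).eventuallyEq (l := ae μ)
  rcases eventuallyConst_set.1 hconst with hfull | hnull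
  · simpa [S] using hfull
  · exact absurd (measure_mono_null hsS (measure_eq_zero_iff_ae_notMem.2 hnull)) hμs

theorem exists_forall_vadd_le_add [VAddInvariantMeasure G X μ] [IsFiniteMeasure μ] {f : X → ℝ≥0}
    (hf : Measurable f) {Φ : ℝ≥0 → ℝ≥0∞} (hΦ : Measurable Φ) (hΦ0 : Φ 0 ≠ ∞)
    (hfΦ : ∫⁻ x, Φ (f x) ∂μ ≠ ∞) :
    ∃ (F : X → ℝ≥0) (M : G → ℝ≥0), Measurable F ∧ ∫⁻ x, Φ (F x) ∂μ ≠ ∞ ∧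
      ∀ᵐ x ∂μ, ∀ g : G, f (g +ᵥ x) ≤ F x + M g := by
  obtain ⟨ε, hε0, hε⟩ := ENNReal.exists_pos_sum_of_countable' one_ne_zero G
  choose M hMμ hMΦ using fun g => exists_measure_le_and_setLIntegral_le hf hfΦ (hε0 g).ne'
  have hlevel (g : G) : MeasurableSet {x | M g < f x} := measurableSet_lt measurable_const hf
  set A : G → Set X := fun g => {x | M g < f (g +ᵥ x)}
  have hA (g : G) : MeasurableSet (A g) := measurable_const_vadd g (hlevel g)
  have hμA (g : G) : μ (A g) ≤ ε g := (measure_preimage_vadd μ g _).trans_le (hMμ g)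
  have hΦA (g : G) : ∫⁻ x in A g, Φ (f (g +ᵥ x)) ∂μ ≤ ε g :=
    ((measurePreserving_vadd g μ).setLIntegral_comp_preimage (hlevel g) (hΦ.comp hf)).trans_le
      (hMΦ g)
  have hfin : ∀ᵐ x ∂μ, {g | x ∈ A g}.Finite :=
    ae_finite_setOfPred_mem (ne_top_of_le_ne_top hε.ne_top (ENNReal.tsum_le_tsum hμA))
  have hfg (g : G) : Measurable fun x => f (g +ᵥ x) := hf.comp (measurable_const_vadd g)
  refine ⟨fun x => ⨆ g, (A g).indicator (fun x => f (g +ᵥ x)) x, M,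
    .iSup fun g => (hfg g).indicator (hA g), ?_, ?_⟩
  · have hsum : ∑' g, ∫⁻ x in A g, Φ (f (g +ᵥ x)) ∂μ ≠ ∞ :=
      ne_top_of_le_ne_top hε.ne_top (ENNReal.tsum_le_tsum hΦA)
    exact ne_top_of_le_ne_top
      (ENNReal.add_ne_top.2 ⟨ENNReal.mul_ne_top hΦ0 (measure_ne_top _ _), hsum⟩)
      (lintegral_comp_iSup_indicator_le hA hfin hfg hΦ)
  · filter_upwards [hfin] with x hx g
    by_cases hg : x ∈ A g
    · calc f (g +ᵥ x) = (A g).indicator (fun x => f (g +ᵥ x)) x := by rw [indicator_of_mem hg]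
        _ ≤ ⨆ h, (A h).indicator (fun x => f (h +ᵥ x)) x :=
            le_ciSup (finite_range_indicator hx fun h => f (h +ᵥ x)).bddAbove g
        _ ≤ _ := le_self_add
    · exact (not_lt.1 hg).trans le_add_self

end GroupAction

theorem ergodicVAdd_of_dense {A : Type*} [AddGroup A] [TopologicalSpace A] [IsTopologicalAddGroup A]
    [MeasurableSpace A] [BorelSpace A] (μ : Measure A) [IsFiniteMeasure μ]
    [μ.InnerRegular] [ErgodicVAdd A A μ] {H : AddSubgroup A} (hH : Dense (H : Set A)) :
    ErgodicVAdd H A μ := by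
  have : AddAction.IsMinimal H A := ⟨fun x => by
    have horbit : AddAction.orbit H x = (· + x) '' (H : Set A) := by
      ext y
      simp only [AddAction.mem_orbit_iff, AddSubgroup.vadd_def, vadd_eq_add, Subtype.exists,
        exists_prop, mem_image, SetLike.mem_coe]
    rw [horbit]
    exact (add_right_surjective x).denseRange.dense_image (continuous_add_const x) hH⟩
  exact ErgodicVAdd.trans_isMinimal μ A

section RationalPoints

/-- The subgroup `ℚ/ℤ` of the circle `ℝ/ℤ`. The Riemann sums at `x` only involve the values on the
coset of `x` modulo this subgroup. -/
noncomputable def rationalPoints : AddSubgroup Circle1 :=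
  ((QuotientAddGroup.mk' (AddSubgroup.zmultiples (1 : ℝ))).comp
    (Rat.castHom ℝ).toAddMonoidHom).range

theorem ratCast_mem_rationalPoints (q : ℚ) : ((q : ℝ) : Circle1) ∈ rationalPoints :=
  ⟨q, rfl⟩

theorem natCast_div_mem_rationalPoints (k n : ℕ) :
    (((k : ℝ) / n : ℝ) : Circle1) ∈ rationalPoints := by
  simpa using ratCast_mem_rationalPoints (k / n)

instance : Countable rationalPoints :=
  (countable_range _).to_subtype

theorem dense_rationalPoints : Dense (rationalPoints : Set Circle1) :=
  (QuotientAddGroup.mk_surjective.denseRange).comp Rat.denseRange_cast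
    (AddCircle.continuous_mk' (1 : ℝ))

instance : ErgodicVAdd rationalPoints Circle1 volume :=
  ergodicVAdd_of_dense volume dense_rationalPoints

end RationalPoints

section RMax

variable {D : Set ℕ} {f g : Circle1 → ℝ} {x y : Circle1}

theorem RiemannSum_le_add {C : ℝ} (hC : 0 ≤ C)
    (hfg : ∀ r ∈ rationalPoints, f (x + r) ≤ g (y + r) + C) (n : ℕ) :
    RiemannSum n f x ≤ RiemannSum n g y + C := by
  unfold RiemannSum
  calc (n : ℝ)⁻¹ * ∑ k ∈ Finset.range n, f (x + ((k / n : ℝ) : Circle1))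
      ≤ (n : ℝ)⁻¹ * ∑ k ∈ Finset.range n, (g (y + ((k / n : ℝ) : Circle1)) + C) := by
        gcongr with k
        exact hfg _ (natCast_div_mem_rationalPoints k n)
    _ = (n : ℝ)⁻¹ * ∑ k ∈ Finset.range n, g (y + ((k / n : ℝ) : Circle1)) + (n : ℝ)⁻¹ * n * C := by
        rw [Finset.sum_add_distrib, Finset.sum_const, Finset.card_range, nsmul_eq_mul]
        ring
    _ ≤ (n : ℝ)⁻¹ * ∑ k ∈ Finset.range n, g (y + ((k / n : ℝ) : Circle1)) + C := by
        gcongr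
        exact mul_le_of_le_one_left hC inv_mul_le_one

theorem RMax_eq_top_of_le_add {C : ℝ} (hC : 0 ≤ C)
    (hfg : ∀ r ∈ rationalPoints, |f (x + r)| ≤ |g (y + r)| + C) (hf : RMax D f x = ⊤) :
    RMax D g y = ⊤ := by
  have hle : RMax D f x ≤ RMax D g y + ENNReal.ofReal C := iSup₂_le fun n hn =>
    calc ENNReal.ofReal (RiemannSum n (fun z => |f z|) x)
        ≤ ENNReal.ofReal (RiemannSum n (fun z => |g z|) y + C) :=
          ENNReal.ofReal_le_ofReal (RiemannSum_le_add hC hfg n)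
      _ ≤ ENNReal.ofReal (RiemannSum n (fun z => |g z|) y) + ENNReal.ofReal C :=
          ENNReal.ofReal_add_le
      _ ≤ RMax D g y + ENNReal.ofReal C := by
          gcongr
          exact le_iSup₂_of_le n hn le_rfl
  simpa [hf] using hle

theorem infinite_of_RMax_eq_top (h : RMax D f x = ⊤) : D.Infinite := by
  intro hD
  have hle : RMax D f x ≤
      ∑ n ∈ hD.toFinset, ENNReal.ofReal (RiemannSum n (fun y => |f y|) x) :=
    iSup₂_le fun n hn => Finset.single_le_sum_of_canonicallyOrdered
      (f := fun n => ENNReal.ofReal (RiemannSum n (fun y => |f y|) x)) (hD.mem_toFinset.2 hn)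
  exact ENNReal.sum_ne_top.2 (fun n _ => ENNReal.ofReal_ne_top) (top_le_iff.1 (h ▸ hle))

theorem measurable_RMax (hf : Measurable f) : Measurable (RMax D f) := by
  unfold RMax RiemannSum
  fun_prop

theorem exists_add_div_eq_coe (x : Circle1) {n : ℕ} (hn : 0 < n) :
    ∃ k < n, ∃ s ∈ Ioc (0 : ℝ) (1 / n), x + ((k / n : ℝ) : Circle1) = s := by
  have hn' : (0 : ℝ) < n := Nat.cast_pos.2 hn
  obtain ⟨t, ⟨ht0, ht1⟩, ht⟩ := AddCircle.eq_coe_Ioc (n • x)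
  have htorsion : n • (((t / n : ℝ) : Circle1) - x) = 0 := by
    rw [nsmul_sub, ← AddCircle.coe_nsmul, nsmul_eq_mul, mul_div_cancel₀ t hn'.ne', ht, sub_self]
  obtain ⟨k, hk, hkx⟩ := (AddCircle.nsmul_eq_zero_iff hn).1 htorsion
  refine ⟨k, hk, t / n, ⟨by positivity, by gcongr⟩, ?_⟩
  rw [mul_one] at hkx
  rw [hkx, add_sub_cancel]

-- The junk value `0` of `(‖y‖ ^ 2)⁻¹` at `y = 0` does no harm, since the witness `s` is positive.
theorem le_RiemannSum_inv_norm_sq {n : ℕ} (hn : 2 ≤ n) (x : Circle1) :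
    n ≤ RiemannSum n (fun y => |(‖y‖ ^ 2)⁻¹|) x := by
  have hn' : (2 : ℝ) ≤ n := by exact_mod_cast hn
  obtain ⟨k, hk, s, ⟨hs0, hs1⟩, hs⟩ := exists_add_div_eq_coe x (two_pos.trans_le hn)
  have hnorm : ‖(s : Circle1)‖ = s := by
    have hs2 : s ≤ 1 / 2 := hs1.trans (by gcongr)
    rw [(AddCircle.norm_coe_eq_abs_iff 1 one_ne_zero).2 (by rwa [abs_of_pos hs0, abs_one]),
      abs_of_pos hs0]
  calc (n : ℝ) = (n : ℝ)⁻¹ * ((1 / n : ℝ) ^ 2)⁻¹ := by field_simp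
    _ ≤ (n : ℝ)⁻¹ * |(‖x + ((k / n : ℝ) : Circle1)‖ ^ 2)⁻¹| := by
        rw [hs, hnorm, abs_of_pos (by positivity)]
        gcongr
    _ ≤ RiemannSum n (fun y => |(‖y‖ ^ 2)⁻¹|) x := by
        unfold RiemannSum
        gcongr
        exact Finset.single_le_sum
          (f := fun k : ℕ => |(‖x + ((k / n : ℝ) : Circle1)‖ ^ 2)⁻¹|)
          (fun _ _ => abs_nonneg _) (Finset.mem_range.2 hk)

theorem RMax_inv_norm_sq (hD : D.Infinite) (x : Circle1) :
    RMax D (fun y => (‖y‖ ^ 2)⁻¹) x = ⊤ := by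
  refine ENNReal.eq_top_of_forall_nnreal_le fun C => ?_
  obtain ⟨n, hnD, hn⟩ := hD.exists_gt (max 2 ⌈C⌉₊)
  obtain ⟨hn2, hnC⟩ := max_lt_iff.1 hn
  have hCn : (C : ℝ) ≤ n := by exact_mod_cast (Nat.le_ceil C).trans (Nat.cast_le.2 hnC.le)
  refine le_iSup₂_of_le n hnD ?_
  rw [← ENNReal.ofReal_coe_nnreal]
  exact ENNReal.ofReal_le_ofReal (hCn.trans (le_RiemannSum_inv_norm_sq hn2.le x))

end RMax

theorem exists_Lphi_RMax_eq_top_everywhere_general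
    (D : Set ℕ) {Φ : ℝ≥0 → ℝ≥0∞} (hΦ : Measurable Φ) (hΦ0 : Φ 0 ≠ ∞)
    {f : Circle1 → ℝ} (hf : Measurable f) (hfΦ : ∫⁻ x, Φ ‖f x‖₊ < ∞)
    (hdiv : 0 < volume {x : Circle1 | RMax D f x = ⊤}) :
    ∃ ftil : Circle1 → ℝ, Measurable ftil ∧ ∫⁻ x, Φ ‖ftil x‖₊ < ∞ ∧
      ∀ x : Circle1, RMax D ftil x = ⊤ := by
  obtain ⟨F, M, hF, hFΦ, hFM⟩ := exists_forall_vadd_le_add (G := rationalPoints) hf.nnnorm hΦ hΦ0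
    hfΦ.ne
  have hdivmeas : MeasurableSet {x | RMax D f x = ⊤} :=
    measurable_RMax hf (measurableSet_singleton ⊤)
  have horbit := ae_exists_vadd_mem (G := rationalPoints) hdivmeas hdiv.ne'
  obtain ⟨N, hsub, hNm, hN, hNinv⟩ :=
    exists_measurable_vadd_invariant_superset_of_null (G := rationalPoints) (hFM.and horbit)
  have hNadd (x : Circle1) {r : Circle1} (hr : r ∈ rationalPoints) : x + r ∈ N ↔ x ∈ N := by
    rw [add_comm]
    exact hNinv ⟨r, hr⟩ x
  classical
  refine ⟨N.piecewise (fun y => (‖y‖ ^ 2)⁻¹) fun y => F y, ?_, ?_, fun x => ?_⟩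
  · exact .piecewise hNm (by fun_prop) (by fun_prop)
  · refine (lintegral_congr_ae ?_).trans_lt hFΦ.lt_top
    filter_upwards [measure_eq_zero_iff_ae_notMem.1 hN] with x hx
    simp [hx]
  by_cases hx : x ∈ N
  · obtain ⟨y, hy⟩ := nonempty_of_measure_ne_zero hdiv.ne'
    refine RMax_eq_top_of_le_add le_rfl (fun r hr => ?_)
      (RMax_inv_norm_sq (infinite_of_RMax_eq_top hy) x)
    simp [(hNadd x hr).2 hx]
  · have hgood {y : Circle1} (hy : y ∉ N) := not_not.1 fun hcon => hy (hsub hcon)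
    obtain ⟨g, hg⟩ := (hgood hx).2
    refine RMax_eq_top_of_le_add (M g).2 (fun r hr => ?_) hg
    have hxr : x + r ∉ N := fun h => hx ((hNadd x hr).1 h)
    have hle : ‖f ((g +ᵥ x) + r)‖₊ ≤ F (x + r) + M g := by
      rw [AddSubgroup.vadd_def, vadd_eq_add, add_assoc]
      exact (hgood hxr).1 g
    simpa [hxr] using NNReal.coe_le_coe.2 hle

/-- **From a.e. divergence to everywhere divergence (Lemma 8).** If for some `f ∈ L^φ`
the maximal function `ℛ_D f` is infinite on a set of positive measure, then there is
`f̃ ∈ L^φ` with `ℛ_D f̃ ≡ ∞` everywhere. -/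
theorem exists_Lphi_RMax_eq_top_everywhere
    (D : Set ℕ) (φ : ℝ → ℝ)
    (hφmono : MonotoneOn φ (Set.Ici 0)) (hφconv : ConvexOn ℝ (Set.Ici 0) φ)
    (hφpos : ∀ x ≥ (0:ℝ), 0 ≤ φ x)
    (f : Circle1 → ℝ) (hfmeas : Measurable f)
    (hfφ : (∫⁻ x, ENNReal.ofReal (φ |f x|)) < ⊤)
    (hdiv : 0 < volume {x : Circle1 | RMax D f x = ⊤}) :
    ∃ ftil : Circle1 → ℝ, Measurable ftil ∧
      (∫⁻ x, ENNReal.ofReal (φ |ftil x|)) < ⊤ ∧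
      ∀ x : Circle1, RMax D ftil x = ⊤ := by
  have hΦ : Monotone fun t : ℝ≥0 => φ t := fun s t hst => hφmono s.2 t.2 hst
  simpa using exists_Lphi_RMax_eq_top_everywhere_general D
    (Φ := fun t => ENNReal.ofReal (φ t)) hΦ.measurable.ennreal_ofReal
    ENNReal.ofReal_ne_top hfmeas (by simpa using hfφ) hdiv
end

section
/- Let (T_n) be a sequence of linear operators from L¹(𝕋) (with Lebesgue probability measure) to measurable functions on 𝕋 that are translation invariant, i.e. T_n f_x(t) = T_n f(x+t) where f_x(t) = f(x+t), and satisfy: (1) f ≥ 0 implies T_n f ≥ 0; (2) T_n 𝟙_𝕋 = 1; and (3) for every ε > 0 there exists δ > 0 such that |E| < δ implies |{x : T_n 𝟙_E(x) > ε}| < ε for all n. If (T_n) is weak δ-sweeping out for every 0 < δ < 1, then (T_n) is strong sweeping out. -/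
open MeasureTheory Filter Set

/-!
The proof is by Baire category in the complete space of measurable sets with `d(E, F) = μ(E ∆ F)`.

Weak sweeping out provides sets `E` such that `{sup_n T_n 𝟙_E > c}` is large compared with `E`. A
union `A` of `k` translates of `E` has measure at most `k μ(E)`, and as translates are independent
on average, they can be chosen so that `sup_n T_n 𝟙_A > c` off a set of measure at most
`(1 - μ{sup_n T_n 𝟙_E > c})^k`. With a suitable `k` both measures are small. Condition (3) makes any
finite set of indices `n` irrelevant here, and also makes `E ↦ T_n 𝟙_E` continuous. Replacing `E` by
`E ∪ A` thus shows that `limsup_n T_n 𝟙_E = 1` a.e. for generic `E`. Since complementation is an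
isometry, `liminf_n T_n 𝟙_E = 1 - limsup_n T_n 𝟙_{Eᶜ} = 0` a.e. for generic `E` as well, and generic
sets exist in every neighbourhood of `∅`.
-/

open scoped ENNReal Topology symmDiff

lemma limsup_eq_of_le_of_forall_lt_frequently {ι R : Type*} [ConditionallyCompleteLinearOrder R]
    [NoMinOrder R] {l : Filter ι} {u : ι → R} {a : R} (hle : ∀ i, u i ≤ a)
    (hfreq : ∀ c < a, ∃ᶠ i in l, c < u i) : limsup u l = a := by
  obtain ⟨b, hb⟩ := exists_lt a
  have hcobdd : IsCoboundedUnder (· ≤ ·) l u :=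
    .of_frequently_ge ((hfreq b hb).mono fun _ => le_of_lt)
  have hbdd : IsBoundedUnder (· ≤ ·) l u := isBoundedUnder_of ⟨a, hle⟩
  exact le_antisymm (limsup_le_of_le hcobdd (.of_forall hle))
    ((le_limsup_iff hcobdd hbdd).2 hfreq)

/-! ### The space of measurable sets -/

lemma symmDiff_limsup_subset_iUnion_symmDiff {α : Type*} (u : ℕ → Set α) (N : ℕ) :
    u N ∆ limsup u atTop ⊆ ⋃ i, u (N + i) ∆ u (N + i + 1) := by
  intro x hx
  by_contra hnot
  have hstep : ∀ i, x ∈ u (N + i) ↔ x ∈ u (N + i + 1) := by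
    simpa only [mem_iUnion, mem_symmDiff, not_exists, not_or, not_and, not_not, ← iff_def]
      using hnot
  have hconst : ∀ n ≥ N, x ∈ u n ↔ x ∈ u N := fun n hn =>
    Nat.le_induction Iff.rfl (fun n hn ih => by
      obtain ⟨i, rfl⟩ := Nat.exists_eq_add_of_le hn
      exact (hstep i).symm.trans ih) n hn
  have hlim : x ∈ limsup u atTop ↔ x ∈ u N := by
    rw [mem_limsup_iff_frequently_mem, frequently_congr (eventually_atTop.2 ⟨N, hconst⟩),
      frequently_const]
  simp only [mem_symmDiff, hlim] at hx
  tauto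

section MeasuredSets

variable {α : Type*} [MeasurableSpace α] {μ : Measure α}

instance completeSpace_measuredSets : CompleteSpace (MeasuredSets μ) := by
  refine EMetric.complete_of_convergent_controlled_sequences (fun n => 2⁻¹ ^ n)
    (fun n => ENNReal.pow_pos (by simp) n) fun u hu => ?_
  let L : MeasuredSets μ :=
    ⟨limsup (fun n => (u n : Set α)) atTop, .measurableSet_limsup fun n => (u n).2⟩
  have hdist : ∀ N, edist (u N) L ≤ 2⁻¹ ^ N * 2 := fun N =>
    calc edist (u N) L
        ≤ μ (⋃ i, (u (N + i) : Set α) ∆ u (N + i + 1)) :=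
          measure_mono (symmDiff_limsup_subset_iUnion_symmDiff (fun n => (u n : Set α)) N)
      _ ≤ ∑' i, μ ((u (N + i) : Set α) ∆ u (N + i + 1)) := measure_iUnion_le _
      _ ≤ ∑' i, 2⁻¹ ^ (N + i) :=
          ENNReal.tsum_le_tsum fun i => (hu (N + i) _ _ le_rfl (Nat.le_succ _)).le
      _ = 2⁻¹ ^ N * 2 := by
          simp only [pow_add, ENNReal.tsum_mul_left, ENNReal.tsum_geometric,
            ENNReal.one_sub_inv_two, inv_inv]
  refine ⟨L, tendsto_iff_edist_tendsto_0.2 (tendsto_of_tendsto_of_tendsto_of_le_of_le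
    tendsto_const_nhds ?_ (fun _ => zero_le) hdist)⟩
  simpa only [zero_mul] using ENNReal.Tendsto.mul_const
    (ENNReal.tendsto_pow_atTop_nhds_zero_of_lt_one (by norm_num)) (.inr ENNReal.ofNat_ne_top)

/-- Complementation, as an isometry of the space of measurable sets. -/
def measuredSetsCompl (μ : Measure α) : MeasuredSets μ ≃ᵢ MeasuredSets μ where
  toFun E := ⟨(E : Set α)ᶜ, E.2.compl⟩
  invFun E := ⟨(E : Set α)ᶜ, E.2.compl⟩
  left_inv E := SetLike.coe_injective (compl_compl (E : Set α))
  right_inv E := SetLike.coe_injective (compl_compl (E : Set α))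
  isometry_toFun E F := congrArg μ (compl_symmDiff_compl (E : Set α) F)

lemma coe_measuredSetsCompl (E : MeasuredSets μ) :
    (measuredSetsCompl μ E : Set α) = (E : Set α)ᶜ := rfl

lemma exists_measurableSet_measure_lt_of_residual {p : Set α → Prop}
    (hp : ∀ᶠ E : MeasuredSets μ in residual (MeasuredSets μ), p E) {ε : ℝ≥0∞} (hε : 0 < ε) :
    ∃ E, MeasurableSet E ∧ μ E < ε ∧ p E := by
  obtain ⟨E, hpE, hE⟩ :=
    EMetric.dense_iff.1 (dense_of_mem_residual hp) (⟨∅, .empty⟩ : MeasuredSets μ) ε hε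
  refine ⟨E, E.2, ?_, hE⟩
  have hdist : μ ((E : Set α) ∆ (∅ : Set α)) < ε := hpE
  rwa [← bot_eq_empty, symmDiff_bot] at hdist

end MeasuredSets

/-! ### Finitely additive kernels -/

section Kernel

variable {α β : Type*} [MeasurableSpace α] [MeasurableSpace β]

/-- A finitely additive kernel: a measurably varying family `x ↦ P · x` of finitely additive
probabilities on the measurable sets. This is what a positive unital operator `T` becomes when it
is only evaluated on indicators, `P E = T 𝟙_E`. -/
structure IsFinAddKernel (P : Set α → β → ℝ) : Prop where
  nonneg : ∀ ⦃E⦄, MeasurableSet E → ∀ x, 0 ≤ P E x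
  union : ∀ ⦃E F⦄, MeasurableSet E → MeasurableSet F → Disjoint E F →
    ∀ x, P (E ∪ F) x = P E x + P F x
  univ : ∀ x, P univ x = 1
  measurable : ∀ ⦃E⦄, MeasurableSet E → Measurable (P E)

/-- The kernel `P` vanishes on small sets, in measure: `P E → 0` in `ν`-measure as `μ E → 0`. -/
def VanishesInMeasure (P : Set α → β → ℝ) (μ : Measure α) (ν : Measure β) : Prop :=
  ∀ ε : ℝ, 0 < ε → ∃ δ : ℝ, 0 < δ ∧ ∀ E, MeasurableSet E → μ E < ENNReal.ofReal δ →
    ν {x | ε < P E x} < ENNReal.ofReal ε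

/-- The points at which none of the values `P n E`, `n ∈ I`, exceeds `c`. Sweeping out means that
these sets are small for sets `E` of small measure. -/
def unswept (P : ℕ → Set α → β → ℝ) (I : Set ℕ) (c : ℝ) (E : Set α) : Set β :=
  {x | ∀ n ∈ I, P n E x ≤ c}

namespace IsFinAddKernel

variable {P : Set α → β → ℝ} (hP : IsFinAddKernel P) {E F : Set α}
include hP

lemma mono (hE : MeasurableSet E) (hF : MeasurableSet F) (hEF : E ⊆ F) (x : β) :
    P E x ≤ P F x := by
  have hsplit := hP.union hE (hF.diff hE) disjoint_sdiff_right x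
  rw [union_sdiff_cancel hEF] at hsplit
  linarith [hP.nonneg (hF.diff hE) x]

lemma compl (hE : MeasurableSet E) (x : β) : P Eᶜ x = 1 - P E x := by
  have hsplit := hP.union hE hE.compl disjoint_compl_right x
  rw [union_compl_self, hP.univ] at hsplit
  linarith

lemma le_one (hE : MeasurableSet E) (x : β) : P E x ≤ 1 := by
  linarith [hP.compl hE x, hP.nonneg hE.compl x]

lemma le_add_sdiff (hE : MeasurableSet E) (hF : MeasurableSet F) (x : β) :
    P E x ≤ P F x + P (E \ F) x := by
  rw [← hP.union hF (hE.diff hF) disjoint_sdiff_right x, union_sdiff_self]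
  exact hP.mono hE (hF.union hE) subset_union_right x

end IsFinAddKernel

lemma isFinAddKernel_indicator {μ : Measure α} [IsFiniteMeasure μ] {T : (α → ℝ) → β → ℝ}
    (hadd : ∀ f g, Integrable f μ → Integrable g μ →
      T (fun x => f x + g x) = fun x => T f x + T g x)
    (hmeas : ∀ f, Integrable f μ → Measurable (T f))
    (hpos : ∀ f, Integrable f μ → (∀ x, 0 ≤ f x) → ∀ x, 0 ≤ T f x)
    (hone : T (fun _ => 1) = fun _ => 1) :
    IsFinAddKernel fun E => T (E.indicator fun _ => (1 : ℝ)) where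
  nonneg E hE := hpos _ ((integrable_const 1).indicator hE)
    (indicator_nonneg fun _ _ => zero_le_one)
  union E F hE hF hEF x := by
    rw [indicator_union_of_disjoint hEF]
    exact congrFun (hadd _ _ ((integrable_const 1).indicator hE)
      ((integrable_const 1).indicator hF)) x
  univ x := by rw [indicator_univ, hone]
  measurable E hE := hmeas _ ((integrable_const 1).indicator hE)

/-! ### The generic behaviour of `P n E` -/

variable {P : ℕ → Set α → β → ℝ} {μ : Measure α} {ν : Measure β}

lemma measurableSet_unswept (hP : ∀ n, IsFinAddKernel (P n)) (I : Set ℕ) (c : ℝ) {E : Set α}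
    (hE : MeasurableSet E) : MeasurableSet (unswept P I c E) := by
  simp only [unswept, ofPred_forall]
  exact .iInter fun n => .iInter fun _ => measurableSet_le ((hP n).measurable hE) measurable_const

lemma unswept_subset_of_subset (hP : ∀ n, IsFinAddKernel (P n)) (I : Set ℕ) (c : ℝ) {E F : Set α}
    (hE : MeasurableSet E) (hF : MeasurableSet F) (hEF : E ⊆ F) :
    unswept P I c F ⊆ unswept P I c E :=
  fun x hx n hn => ((hP n).mono hE hF hEF x).trans (hx n hn)

lemma exists_measureReal_unswept_Ico_lt [IsFiniteMeasure ν] (hP : ∀ n, IsFinAddKernel (P n))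
    {N : ℕ} {c ε : ℝ} {E : Set α} (hE : MeasurableSet E)
    (hlt : ν.real (unswept P (Ici N) c E) < ε) :
    ∃ M, ν.real (unswept P (Ico N M) c E) < ε := by
  have hInter : ⋂ M, unswept P (Ico N M) c E = unswept P (Ici N) c E := by
    ext x
    simp only [mem_iInter]
    exact ⟨fun hx n hn => hx (n + 1) n ⟨hn, n.lt_succ_self⟩, fun hx M n hn => hx n hn.1⟩
  have hanti : Antitone fun M => unswept P (Ico N M) c E :=
    fun M M' hMM x hx n hn => hx n ⟨hn.1, hn.2.trans_le hMM⟩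
  have hlim := tendsto_measure_iInter_atTop (μ := ν)
    (fun M => (measurableSet_unswept hP (Ico N M) c hE).nullMeasurableSet) hanti
    ⟨0, measure_ne_top _ _⟩
  rw [hInter] at hlim
  have hlim_real := (ENNReal.tendsto_toReal (measure_ne_top _ _)).comp hlim
  exact (hlim_real.eventually_lt_const hlt).exists

lemma VanishesInMeasure.exists_measureReal_exists_lt_lt [IsFiniteMeasure μ] [IsFiniteMeasure ν]
    (hvan : ∀ n, VanishesInMeasure (P n) μ ν) (N : ℕ) {ε : ℝ} (hε : 0 < ε) :
    ∃ δ : ℝ, 0 < δ ∧ ∀ E, MeasurableSet E → μ.real E < δ →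
      ν.real {x | ∃ n < N, ε < P n E x} < ε := by
  induction N generalizing ε with
  | zero => exact ⟨1, one_pos, fun E _ _ => by simpa using hε⟩
  | succ N ih =>
    obtain ⟨δ₁, hδ₁, hfirst⟩ := ih (half_pos hε)
    obtain ⟨δ₂, hδ₂, hlast⟩ := hvan N (ε / 2) (half_pos hε)
    refine ⟨min δ₁ δ₂, lt_min hδ₁ hδ₂, fun E hE hEδ => ?_⟩
    have hlast' : ν.real {x | ε / 2 < P N E x} < ε / 2 :=
      ENNReal.toReal_lt_of_lt_ofReal (hlast E hE
        ((ENNReal.lt_ofReal_iff_toReal_lt (measure_ne_top _ _)).2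
          (hEδ.trans_le (min_le_right _ _))))
    have hsub : {x | ∃ n < N + 1, ε < P n E x} ⊆
        {x | ∃ n < N, ε / 2 < P n E x} ∪ {x | ε / 2 < P N E x} := by
      rintro x ⟨n, hn, hx⟩
      have hx' : ε / 2 < P n E x := (half_lt_self hε).trans hx
      rcases Nat.lt_succ_iff_lt_or_eq.1 hn with hn | rfl
      exacts [.inl ⟨n, hn, hx'⟩, .inr hx']
    calc ν.real {x | ∃ n < N + 1, ε < P n E x}
        ≤ ν.real {x | ∃ n < N, ε / 2 < P n E x} + ν.real {x | ε / 2 < P N E x} :=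
          (measureReal_mono hsub).trans (measureReal_union_le _ _)
      _ < ε / 2 + ε / 2 := add_lt_add (hfirst E hE (hEδ.trans_le (min_le_left _ _))) hlast'
      _ = ε := add_halves ε

lemma eventually_measureReal_unswept_lt [IsFiniteMeasure μ] [IsFiniteMeasure ν]
    (hP : ∀ n, IsFinAddKernel (P n)) (hvan : ∀ n, VanishesInMeasure (P n) μ ν) {N : ℕ}
    {c c' ε : ℝ} (hc : c < c') {E : MeasuredSets μ}
    (hE : ν.real (unswept P (Ici N) c' E) < ε) :
    ∀ᶠ F : MeasuredSets μ in 𝓝 E, ν.real (unswept P (Ici N) c F) < ε := by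
  obtain ⟨M, hM⟩ := exists_measureReal_unswept_Ico_lt hP E.2 hE
  set η : ℝ := min (c' - c) (ε - ν.real (unswept P (Ico N M) c' E))
  have hη : 0 < η := lt_min (sub_pos.2 hc) (sub_pos.2 hM)
  obtain ⟨δ, hδ, hsmall⟩ := VanishesInMeasure.exists_measureReal_exists_lt_lt hvan M hη
  filter_upwards [Metric.ball_mem_nhds E hδ] with F hF
  have hdiff : μ.real ((E : Set α) \ F) < δ :=
    (measureReal_mono (fun x hx => .inr hx)).trans_lt (Metric.mem_ball.1 hF)
  have hsub : unswept P (Ici N) c F ⊆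
      unswept P (Ico N M) c' E ∪ {x | ∃ n < M, η < P n ((E : Set α) \ F) x} := by
    intro x hx
    by_contra! hnot
    simp only [mem_union, mem_ofPred_eq, not_or, not_exists, not_and, not_lt] at hnot
    refine hnot.1 fun n hn => ?_
    calc P n E x ≤ P n F x + P n ((E : Set α) \ F) x := (hP n).le_add_sdiff E.2 F.2 x
      _ ≤ c + η := add_le_add (hx n hn.1) (hnot.2 n hn.2)
      _ ≤ c' := by linarith [min_le_left (c' - c) (ε - ν.real (unswept P (Ico N M) c' E))]
  calc ν.real (unswept P (Ici N) c F)
      ≤ ν.real (unswept P (Ico N M) c' E) + ν.real {x | ∃ n < M, η < P n ((E : Set α) \ F) x} :=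
        (measureReal_mono hsub).trans (measureReal_union_le _ _)
    _ < ν.real (unswept P (Ico N M) c' E) + η := by
        gcongr
        exact hsmall _ (E.2.diff F.2) hdiff
    _ ≤ ε := by linarith [min_le_right (c' - c) (ε - ν.real (unswept P (Ico N M) c' E))]

/-- Sets of arbitrarily small `μ`-measure are spread over almost the whole space: the kernels
`P n`, taken together, push their mass above any level `c < 1` outside of a small set. -/
def SpreadsSmallSets (P : ℕ → Set α → β → ℝ) (μ : Measure α) (ν : Measure β) : Prop :=
  ∀ c < 1, ∀ η : ℝ, 0 < η → ∃ A, MeasurableSet A ∧ μ.real A < η ∧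
    ν.real (unswept P univ c A) < η

lemma SpreadsSmallSets.exists_unswept_Ici_lt [IsFiniteMeasure μ] [IsFiniteMeasure ν]
    (hspread : SpreadsSmallSets P μ ν) (hvan : ∀ n, VanishesInMeasure (P n) μ ν) (N : ℕ)
    {c : ℝ} (hc₀ : 0 < c) (hc₁ : c < 1) {η : ℝ} (hη : 0 < η) :
    ∃ A, MeasurableSet A ∧ μ.real A < η ∧ ν.real (unswept P (Ici N) c A) < η := by
  set ρ : ℝ := min c (η / 2)
  have hρ : 0 < ρ := lt_min hc₀ (half_pos hη)
  obtain ⟨δ, hδ, hsmall⟩ := VanishesInMeasure.exists_measureReal_exists_lt_lt hvan N hρ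
  obtain ⟨A, hA, hμA, hνA⟩ := hspread c hc₁ (min δ (η / 2)) (lt_min hδ (half_pos hη))
  refine ⟨A, hA, hμA.trans (min_lt_of_right_lt (half_lt_self hη)), ?_⟩
  have hsub : unswept P (Ici N) c A ⊆ unswept P univ c A ∪ {x | ∃ n < N, ρ < P n A x} := by
    intro x hx
    by_contra! hnot
    simp only [mem_union, mem_ofPred_eq, not_or, not_exists, not_and, not_lt] at hnot
    refine hnot.1 fun n _ => ?_
    rcases lt_or_ge n N with hn | hn
    exacts [(hnot.2 n hn).trans (min_le_left _ _), hx n hn]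
  calc ν.real (unswept P (Ici N) c A)
      ≤ ν.real (unswept P univ c A) + ν.real {x | ∃ n < N, ρ < P n A x} :=
        (measureReal_mono hsub).trans (measureReal_union_le _ _)
    _ < η / 2 + η / 2 := add_lt_add (hνA.trans_le (min_le_right _ _))
        ((hsmall A hA (hμA.trans_le (min_le_left _ _))).trans_le (min_le_right _ _))
    _ = η := add_halves η

section Residual

variable [IsFiniteMeasure μ] [IsFiniteMeasure ν] (hP : ∀ n, IsFinAddKernel (P n))
  (hvan : ∀ n, VanishesInMeasure (P n) μ ν) (hspread : SpreadsSmallSets P μ ν)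
include hP hvan hspread

lemma residual_measureReal_unswept_lt (N : ℕ) {c ε : ℝ} (hc₁ : c < 1) (hε : 0 < ε) :
    ∀ᶠ E : MeasuredSets μ in residual (MeasuredSets μ), ν.real (unswept P (Ici N) c E) < ε := by
  obtain ⟨c', hc', hc'₁⟩ := exists_between (max_lt hc₁ one_pos)
  have hdense : Dense (interior {E : MeasuredSets μ | ν.real (unswept P (Ici N) c E) < ε}) := by
    refine Metric.dense_iff.2 fun E r hr => ?_
    obtain ⟨A, hA, hμA, hνA⟩ := hspread.exists_unswept_Ici_lt hvan N
      ((le_max_right c 0).trans_lt hc') hc'₁ (lt_min hr hε)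
    let F : MeasuredSets μ := ⟨E ∪ A, E.2.union hA⟩
    have hdist : dist F E ≤ μ.real A := measureReal_mono fun x hx => by
      rcases hx with ⟨hx | hx, hxE⟩ | ⟨hx, hxF⟩
      exacts [absurd hx hxE, hx, absurd (.inl hx) hxF]
    have hF : ν.real (unswept P (Ici N) c' F) < ε :=
      (measureReal_mono (unswept_subset_of_subset hP _ _ hA F.2 subset_union_right)).trans_lt
        (hνA.trans_le (min_le_right _ _))
    exact ⟨F, hdist.trans_lt (hμA.trans_le (min_le_left _ _)), mem_interior_iff_mem_nhds.2
      (eventually_measureReal_unswept_lt hP hvan ((le_max_left c 0).trans_lt hc') hF)⟩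
  exact mem_of_superset (residual_of_dense_open isOpen_interior hdense) interior_subset

lemma residual_ae_frequently_lt {c : ℝ} (hc : c < 1) :
    ∀ᶠ E : MeasuredSets μ in residual (MeasuredSets μ),
      ∀ᵐ x ∂ν, ∃ᶠ n in atTop, c < P n E x := by
  have hsmall : ∀ᶠ E : MeasuredSets μ in residual (MeasuredSets μ), ∀ N k : ℕ,
      ν.real (unswept P (Ici N) c E) < 1 / (k + 1) :=
    eventually_countable_forall.2 fun N => eventually_countable_forall.2 fun k =>
      residual_measureReal_unswept_lt hP hvan hspread N hc Nat.one_div_pos_of_nat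
  filter_upwards [hsmall] with E hE
  have hnull : ∀ N, ν (unswept P (Ici N) c E) = 0 := fun N =>
    (measureReal_eq_zero_iff).1 (le_antisymm
      (ge_of_tendsto' tendsto_one_div_add_atTop_nhds_zero_nat fun k => (hE N k).le)
      measureReal_nonneg)
  filter_upwards [ae_all_iff.2 fun N => measure_eq_zero_iff_ae_notMem.1 (hnull N)] with x hx
  refine frequently_atTop.2 fun N => ?_
  simpa only [unswept, mem_ofPred_eq, mem_Ici, not_forall, not_le, exists_prop] using hx N

theorem residual_ae_limsup_eq_one :
    ∀ᶠ E : MeasuredSets μ in residual (MeasuredSets μ),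
      ∀ᵐ x ∂ν, limsup (fun n => P n E x) atTop = 1 := by
  obtain ⟨c, -, hc_lt, hc_lim⟩ := exists_seq_strictMono_tendsto (1 : ℝ)
  have hfreq := eventually_countable_forall.2 fun k =>
    residual_ae_frequently_lt hP hvan hspread (hc_lt k)
  filter_upwards [hfreq] with E hE
  filter_upwards [ae_all_iff.2 hE] with x hx
  refine limsup_eq_of_le_of_forall_lt_frequently (fun n => (hP n).le_one E.2 x) fun a ha => ?_
  obtain ⟨k, hk⟩ := (hc_lim.eventually_const_lt ha).exists
  exact (hx k).mono fun n => hk.trans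

theorem residual_ae_liminf_eq_zero :
    ∀ᶠ E : MeasuredSets μ in residual (MeasuredSets μ),
      ∀ᵐ x ∂ν, liminf (fun n => P n E x) atTop = 0 := by
  have hgeneric : Tendsto (measuredSetsCompl μ) (residual _) (residual _) :=
    tendsto_residual_of_isOpenMap (measuredSetsCompl μ).continuous
      (measuredSetsCompl μ).toHomeomorph.isOpenMap
  filter_upwards [hgeneric.eventually (residual_ae_limsup_eq_one hP hvan hspread)] with E hE
  filter_upwards [hE] with x hx
  have hbdd : IsBoundedUnder (· ≤ ·) atTop fun n => P n (measuredSetsCompl μ E) x :=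
    isBoundedUnder_of ⟨1, fun n => (hP n).le_one (measuredSetsCompl μ E).2 x⟩
  have hbdd' : IsBoundedUnder (· ≥ ·) atTop fun n => P n (measuredSetsCompl μ E) x :=
    isBoundedUnder_of ⟨0, fun n => (hP n).nonneg (measuredSetsCompl μ E).2 x⟩
  have hsub := liminf_const_sub atTop (fun n => P n (measuredSetsCompl μ E) x) 1 hbdd
    hbdd'.isCoboundedUnder_le
  have hcompl : ∀ n, P n (E : Set α)ᶜ x = 1 - P n E x := fun n => (hP n).compl E.2 x
  rw [hx] at hsub
  simpa only [coe_measuredSetsCompl, hcompl, sub_sub_cancel, sub_self] using hsub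

end Residual

/-- The sequence `P n` (for operators, `P n E = T n 𝟙_E`) is strong sweeping out. -/
def StrongSweepingOut (P : ℕ → Set α → α → ℝ) (μ : Measure α) : Prop :=
  ∀ ε : ℝ, 0 < ε → ∃ E, MeasurableSet E ∧ μ E < ENNReal.ofReal ε ∧
    (∀ᵐ x ∂μ, limsup (fun n => P n E x) atTop = 1) ∧
    (∀ᵐ x ∂μ, liminf (fun n => P n E x) atTop = 0)

/-- The sequence `P n` (for operators, `P n E = T n 𝟙_E`) is weak `δ`-sweeping out. -/
def WeakSweepingOut (P : ℕ → Set α → α → ℝ) (μ : Measure α) (δ : ℝ) : Prop :=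
  ∀ r : ℝ, 0 < r → ∃ E, MeasurableSet E ∧
    ENNReal.ofReal r * μ E < μ {x | δ ≤ ⨆ n, P n E x}

theorem SpreadsSmallSets.strongSweepingOut {P : ℕ → Set α → α → ℝ} [IsFiniteMeasure μ]
    (hspread : SpreadsSmallSets P μ μ) (hP : ∀ n, IsFinAddKernel (P n))
    (hvan : ∀ n, VanishesInMeasure (P n) μ μ) : StrongSweepingOut P μ := fun _ hε =>
  exists_measurableSet_measure_lt_of_residual
    ((residual_ae_limsup_eq_one hP hvan hspread).and (residual_ae_liminf_eq_zero hP hvan hspread))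
    (ENNReal.ofReal_pos.2 hε)

end Kernel

/-! ### Covering by translates -/

section Translation

lemma exists_nat_mul_lt_and_one_sub_pow_lt {η : ℝ} (hη : 0 < η) :
    ∃ r > 0, ∀ m g : ℝ, 0 ≤ m → g ≤ 1 → r * m < g → ∃ k : ℕ, k * m < η ∧ (1 - g) ^ k < η := by
  refine ⟨(1 / η + 1) / η, by positivity, fun m g hm hg₁ hmg => ?_⟩
  have hg : 0 < g := lt_of_le_of_lt (by positivity) hmg
  set k : ℕ := ⌈1 / η / g⌉₊
  have hkg : 1 / η ≤ k * g := (div_le_iff₀ hg).1 (Nat.le_ceil _)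
  have hk : (0 : ℝ) < k := pos_of_mul_pos_left (lt_of_lt_of_le (by positivity) hkg) hg.le
  have hkg' : k * g ≤ 1 / η + 1 := by
    have hceil : k * g < (1 / η / g + 1) * g := by
      gcongr
      exact Nat.ceil_lt_add_one (by positivity)
    rw [add_mul, div_mul_cancel₀ _ hg.ne'] at hceil
    linarith
  refine ⟨k, ?_, ?_⟩
  · have hlt : (1 / η + 1) * (k * m) < (1 / η + 1) * η :=
      calc (1 / η + 1) * (k * m) = k * ((1 / η + 1) / η * m) * η := by field_simp
        _ < k * g * η := by gcongr
        _ ≤ (1 / η + 1) * η := by gcongr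
    exact lt_of_mul_lt_mul_left hlt (by positivity)
  · calc (1 - g) ^ k ≤ Real.exp (-g) ^ k :=
          pow_le_pow_left₀ (by linarith) (Real.one_sub_le_exp_neg g) k
      _ = (Real.exp (k * g))⁻¹ := by rw [← Real.exp_nat_mul, mul_neg, Real.exp_neg]
      _ ≤ (Real.exp (1 / η))⁻¹ := by gcongr
      _ < (1 / η)⁻¹ := by
          gcongr
          linarith [Real.add_one_le_exp (1 / η)]
      _ = η := by rw [one_div, inv_inv]

variable {G : Type*} [Add G] [MeasurableSpace G] [MeasurableAdd₂ G] {μ : Measure G}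
  [IsProbabilityMeasure μ]

/-- On average over `x`, a set `A` and the translate by `x` of a set `B` are independent. -/
lemma exists_measureReal_inter_preimage_add_le [μ.IsAddRightInvariant] {A B : Set G}
    (hA : MeasurableSet A) (hB : MeasurableSet B) :
    ∃ x : G, μ.real (A ∩ (x + ·) ⁻¹' B) ≤ μ.real A * μ.real B := by
  let S : Set (G × G) := {p | p.2 ∈ A ∧ p.1 + p.2 ∈ B}
  have hS : MeasurableSet S := (measurable_snd hA).inter ((measurable_fst.add measurable_snd) hB)
  have hsection : ∀ y, μ ((fun x => (x, y)) ⁻¹' S) = A.indicator (fun _ => μ B) y := by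
    intro y
    by_cases hy : y ∈ A
    · rw [indicator_of_mem hy,
        ← (measurePreserving_add_right μ y).measure_preimage hB.nullMeasurableSet]
      congr 1
      ext x
      exact and_iff_right hy
    · have hempty : (fun x => (x, y)) ⁻¹' S = ∅ :=
        eq_empty_of_forall_notMem fun x hx => hy hx.1
      rw [indicator_of_notMem hy, hempty, measure_empty]
  have hmean : ∫⁻ x, μ (Prod.mk x ⁻¹' S) ∂μ = μ A * μ B := by
    rw [← Measure.prod_apply hS, Measure.prod_apply_symm hS, lintegral_congr hsection,
      lintegral_indicator_const hA, mul_comm]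
  obtain ⟨x, hx⟩ := exists_le_lintegral (μ := μ)
    (measurable_measure_prodMk_left (ν := μ) hS).aemeasurable
  refine ⟨x, ?_⟩
  rw [hmean] at hx
  exact (ENNReal.toReal_mono (by finiteness) hx).trans_eq ENNReal.toReal_mul

variable [μ.IsAddLeftInvariant] [μ.IsAddRightInvariant] {P : ℕ → Set G → G → ℝ}
  (hP : ∀ n, IsFinAddKernel (P n))
  (htrans : ∀ n E, MeasurableSet E → ∀ x t, P n ((x + ·) ⁻¹' E) t = P n E (x + t))
include hP htrans

lemma exists_measureReal_unswept_le_pow (I : Set ℕ) (c : ℝ) {E : Set G} (hE : MeasurableSet E)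
    (k : ℕ) : ∃ F, MeasurableSet F ∧ μ.real F ≤ k * μ.real E ∧
      μ.real (unswept P I c F) ≤ μ.real (unswept P I c E) ^ k := by
  induction k with
  | zero => exact ⟨∅, .empty, by simp, by simp⟩
  | succ k ih =>
    obtain ⟨F, hF, hsize, hunswept⟩ := ih
    obtain ⟨x, hx⟩ := exists_measureReal_inter_preimage_add_le (μ := μ)
      (measurableSet_unswept hP I c hF) (measurableSet_unswept hP I c hE)
    have hpre : MeasurableSet ((x + ·) ⁻¹' E) := measurable_const_add x hE
    refine ⟨F ∪ (x + ·) ⁻¹' E, hF.union hpre, ?_, ?_⟩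
    · calc μ.real (F ∪ (x + ·) ⁻¹' E) ≤ μ.real F + μ.real ((x + ·) ⁻¹' E) :=
            measureReal_union_le _ _
        _ = μ.real F + μ.real E := by
            rw [(measurePreserving_add_left μ x).measureReal_preimage hE.nullMeasurableSet]
        _ ≤ (k + 1 : ℕ) * μ.real E := by push_cast; linarith
    · have hsub : unswept P I c (F ∪ (x + ·) ⁻¹' E) ⊆
          unswept P I c F ∩ (x + ·) ⁻¹' unswept P I c E := fun t ht =>
        ⟨unswept_subset_of_subset hP I c hF (hF.union hpre) subset_union_left ht, fun n hn =>
          htrans n E hE x t ▸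
            unswept_subset_of_subset hP I c hpre (hF.union hpre) subset_union_right ht n hn⟩
      calc μ.real (unswept P I c (F ∪ (x + ·) ⁻¹' E))
          ≤ μ.real (unswept P I c F) * μ.real (unswept P I c E) := (measureReal_mono hsub).trans hx
        _ ≤ μ.real (unswept P I c E) ^ (k + 1) := by rw [pow_succ]; gcongr

theorem spreadsSmallSets_of_weakSweepingOut
    (hweak : ∀ δ : ℝ, 0 < δ → δ < 1 → WeakSweepingOut P μ δ) : SpreadsSmallSets P μ μ := by
  intro c hc η hη
  obtain ⟨δ, hδ, hδ₁⟩ := exists_between (max_lt hc one_pos)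
  obtain ⟨r, hr, hpow⟩ := exists_nat_mul_lt_and_one_sub_pow_lt hη
  obtain ⟨E, hE, hlt⟩ := hweak δ ((le_max_right c 0).trans_lt hδ) hδ₁ r hr
  have hsub : {x | δ ≤ ⨆ n, P n E x} ⊆ (unswept P univ c E)ᶜ := fun x hx hxE => by
    obtain ⟨n, hn⟩ := exists_lt_of_lt_ciSup (((le_max_left c 0).trans_lt hδ).trans_le hx)
    exact hn.not_ge (hxE n (mem_univ n))
  have hlt_real : r * μ.real E < μ.real (unswept P univ c E)ᶜ := by
    refine lt_of_lt_of_le ?_ (measureReal_mono hsub)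
    simpa only [measureReal_def, ENNReal.toReal_mul, ENNReal.toReal_ofReal hr.le] using
      (ENNReal.toReal_lt_toReal (by finiteness) (by finiteness)).2 hlt
  obtain ⟨k, hk, hk'⟩ := hpow _ _ measureReal_nonneg measureReal_le_one hlt_real
  obtain ⟨F, hF, hsize, hunswept⟩ := exists_measureReal_unswept_le_pow (μ := μ) hP htrans
    univ c hE k
  refine ⟨F, hF, hsize.trans_lt hk, hunswept.trans_lt ?_⟩
  rwa [probReal_compl_eq_one_sub (measurableSet_unswept hP univ c hE), sub_sub_cancel] at hk'

end Translation

theorem strong_sweeping_out_of_weak_delta_sweeping_out_general {G : Type*} [Add G]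
    [MeasurableSpace G] [MeasurableAdd₂ G] {μ : Measure G} [IsProbabilityMeasure μ]
    [μ.IsAddLeftInvariant] [μ.IsAddRightInvariant] {P : ℕ → Set G → G → ℝ}
    (hP : ∀ n, IsFinAddKernel (P n))
    (htrans : ∀ n E, MeasurableSet E → ∀ x t, P n ((x + ·) ⁻¹' E) t = P n E (x + t))
    (hvan : ∀ n, VanishesInMeasure (P n) μ μ)
    (hweak : ∀ δ : ℝ, 0 < δ → δ < 1 → WeakSweepingOut P μ δ) : StrongSweepingOut P μ :=
  (spreadsSmallSets_of_weakSweepingOut hP htrans hweak).strongSweepingOut hP hvan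

/-- **Weak δ-sweeping out implies strong sweeping out for translation invariant operators
(Theorem 7).** Let `(T n)` be translation invariant linear operators from `L¹(𝕋)` to
measurable functions satisfying positivity, `T n 1 = 1`, and condition (3). If `(T n)` is
weak `δ`-sweeping out for every `0 < δ < 1`, then it is strong sweeping out. -/
theorem strong_sweeping_out_of_weak_delta_sweeping_out
    (T : ℕ → (Circle1 → ℝ) → (Circle1 → ℝ))
    -- `T n` is linear (on integrable functions) and maps into measurable functions
    (hadd : ∀ n f g, Integrable f volume → Integrable g volume →
      T n (fun x => f x + g x) = fun x => T n f x + T n g x)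
    (hsmul : ∀ (n : ℕ) (c : ℝ) (f), Integrable f volume →
      T n (fun x => c * f x) = fun x => c * T n f x)
    (hmeas : ∀ n f, Integrable f volume → Measurable (T n f))
    -- translation invariance: `T n f_x(t) = (T n f)(x + t)` where `f_x(t) = f(x+t)`
    (htrans : ∀ n f, Integrable f volume →
      ∀ x : Circle1, T n (fun t => f (x + t)) = fun t => T n f (x + t))
    -- (1) positivity
    (hpos : ∀ n f, Integrable f volume → (∀ x, 0 ≤ f x) → ∀ x, 0 ≤ T n f x)
    -- (2) `T n 𝟙_𝕋 = 1`
    (hone : ∀ n, T n (fun _ => 1) = fun _ => 1)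
    -- (3) continuity at small sets
    (habs : ∀ ε : ℝ, 0 < ε → ∃ δ : ℝ, 0 < δ ∧
      ∀ E : Set Circle1, MeasurableSet E → volume E < ENNReal.ofReal δ →
        ∀ n, volume {x | ε < T n (E.indicator fun _ => (1:ℝ)) x} < ENNReal.ofReal ε)
    -- `(T n)` is weak δ-sweeping out for every `0 < δ < 1`
    (hweak : ∀ δ : ℝ, 0 < δ → δ < 1 → ∀ r : ℝ, 0 < r →
      ∃ E : Set Circle1, MeasurableSet E ∧
        ENNReal.ofReal r * volume E <
          volume {x | δ ≤ ⨆ n, T n (E.indicator fun _ => (1:ℝ)) x}) :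
    -- conclusion: strong sweeping out
    ∀ ε : ℝ, 0 < ε →
      ∃ E : Set Circle1, MeasurableSet E ∧ volume E < ENNReal.ofReal ε ∧
        (∀ᵐ x, limsup (fun n => T n (E.indicator fun _ => (1:ℝ)) x) atTop = 1) ∧
        (∀ᵐ x, liminf (fun n => T n (E.indicator fun _ => (1:ℝ)) x) atTop = 0) := by
  have : IsProbabilityMeasure (volume : Measure Circle1) := ⟨UnitAddCircle.measure_univ⟩
  exact strong_sweeping_out_of_weak_delta_sweeping_out_general
    (fun n => isFinAddKernel_indicator (hadd n) (hmeas n) (hpos n) (hone n))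
    (fun n E hE x => congrFun
      (htrans n (E.indicator fun _ => 1) ((integrable_const 1).indicator hE) x))
    (fun n ε hε => (habs ε hε).imp fun _ hδ => ⟨hδ.1, fun E hE hEδ => hδ.2 E hE hEδ n⟩) hweak
end
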